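/- Assume conditions (Cond1), (CondAttr2) and (CondAttr3). Let u₀ⁿ → u₀ in H and σ_n = (b_n, ω_n) → σ = (b̄, ω̄) in Σ. Then for any sequence of solutions u_n ∈ 𝒟_{0,σ_n}(u₀ⁿ) there exist a subsequence u_{n'} and a solution u ∈ 𝒟_{0,σ}(u₀) such that u_{n'} → u in C([0,+∞),H) (uniformly on compact subsets of [0,+∞)). -/

import Mathlib

open MeasureTheory Set

noncomputable section

/-- Lebesgue measure restricted to the spatial interval `(0,1)`. -/
def μ01 : Measure ℝ := volume.restrict (Ioo (0:ℝ) 1)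

/-- `H = L²(0,1)`. -/
abbrev Hsp : Type := Lp ℝ 2 μ01

/-- The Heaviside multifunction. -/
def heaviside (s : ℝ) : Set ℝ :=
  if s < 0 then {-1} else if s = 0 then Icc (-1) 1 else {1}

/-- Condition (Cond1). -/
structure Cond1 (b ω : ℝ → ℝ) (b0 b1 ω0 ω1 : ℝ) : Prop where
  contb : Continuous b
  contω : Continuous ω
  b0pos : 0 < b0
  blb : ∀ t, b0 ≤ b t
  bub : ∀ t, b t ≤ b1
  ω0nonneg : 0 ≤ ω0
  ωlb : ∀ t, ω0 ≤ ω t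
  ωub : ∀ t, ω t ≤ ω1

/-- `v ∈ H²(0,1) ∩ H¹₀(0,1)` with (weak) second derivative `w ∈ L²(0,1)`:
`v` has a representative that is continuous on `[0,1]`, vanishes at the boundary,
is differentiable on `(0,1)` and whose derivative is an antiderivative of `w`. -/
def InDomainA (v w : Hsp) : Prop :=
  ∃ vt : ℝ → ℝ, ContinuousOn vt (Icc 0 1) ∧ vt 0 = 0 ∧ vt 1 = 0 ∧
    (∀ᵐ x ∂μ01, vt x = v x) ∧
    ∃ g : ℝ → ℝ,
      (∀ x ∈ Ioo (0:ℝ) 1, HasDerivAt vt (g x) x) ∧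
      ∀ x ∈ Ioo (0:ℝ) 1, ∀ y ∈ Ioo (0:ℝ) 1, g x - g y = ∫ z in y..x, w z

/-- A strong solution of the inclusion on `[τ,∞)`, with explicit data:
`r` is the `L²`-selection, `u'` the time derivative, `uxx` the second spatial derivative. -/
structure IsStrongSolutionWith (b ω : ℝ → ℝ) (τ : ℝ) (u r u' uxx : ℝ → Hsp) : Prop where
  cont : ContinuousOn u (Ici τ)
  rmem : ∀ T, τ < T → MemLp r 2 (volume.restrict (Ioo τ T))
  sel : ∀ᵐ t ∂(volume.restrict (Ioi τ)), ∀ᵐ x ∂μ01,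
      ∃ h ∈ heaviside (u t x), r t x = b t * h + ω t * u t x
  dom : ∀ᵐ t ∂(volume.restrict (Ioi τ)), InDomainA (u t) (uxx t)
  eq : ∀ᵐ t ∂(volume.restrict (Ioi τ)), u' t = r t + uxx t
  fund : ∀ T1 T2 : ℝ, τ < T1 → T1 < T2 →
      IntervalIntegrable u' volume T1 T2 ∧
      ∀ t ∈ Icc T1 T2, u t = u T1 + ∫ s in T1..t, u' s

/-- A strong solution of the inclusion on `[τ,∞)`. -/
def IsStrongSolution (b ω : ℝ → ℝ) (τ : ℝ) (u : ℝ → Hsp) : Prop :=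
  ∃ r u' uxx, IsStrongSolutionWith b ω τ u r u' uxx

/-- The solution is non-negative on `[τ,∞)`. -/
def NonnegOn (u : ℝ → Hsp) (τ : ℝ) : Prop :=
  ∀ t, τ ≤ t → ∀ᵐ x ∂μ01, 0 ≤ u t x

/-- `v` is positive: it has a continuous representative on `[0,1]`
which is strictly positive on `(0,1)`. -/
def IsPositive (v : Hsp) : Prop :=
  ∃ vt : ℝ → ℝ, ContinuousOn vt (Icc 0 1) ∧ (∀ᵐ x ∂μ01, vt x = v x) ∧
    ∀ x ∈ Ioo (0:ℝ) 1, 0 < vt x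


/-- The translation (driving) operator `θ_h` on symbols `σ ∈ C(ℝ,ℝ²)`:
`(θ_h σ)(t) = σ(t+h)`. -/
def translateCM (h : ℝ) (σ : C(ℝ, ℝ × ℝ)) : C(ℝ, ℝ × ℝ) :=
  σ.comp ⟨fun t => t + h, continuous_add_right h⟩

/-- The hull of a symbol `σ₀`: the closure (for the topology of uniform
convergence on compact sets, i.e. the compact-open topology) of its translates. -/
def hullSet (σ0 : C(ℝ, ℝ × ℝ)) : Set C(ℝ, ℝ × ℝ) :=
  closure {σ | ∃ h : ℝ, σ = translateCM h σ0}

/-- The multivalued process associated with the symbol `σ`: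
`U_σ(t,τ,x) = {u(t) : u ∈ 𝒟_{τ,σ}(x)}`. -/
def Usol (σ : C(ℝ, ℝ × ℝ)) (t τ : ℝ) (x : Hsp) : Set Hsp :=
  {y | ∃ u : ℝ → Hsp,
      IsStrongSolution (fun s => (σ s).1) (fun s => (σ s).2) τ u ∧
      u τ = x ∧ y = u t}

/-!
In the orthonormal basis of Dirichlet eigenfunctions a strong solution is the same thing as a
continuous curve whose coordinates solve the scalar equations `c' = -λ c + ρ`, where `ρ` is the
coordinate of an `L²` selection of the right-hand side. The energy estimates for these equations
bound the selections on bounded time intervals, so a subsequence of them converges weakly in `L²`.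
Each coordinate of the solutions then converges locally uniformly, and because `λ → ∞` the energy
estimates make the tails of the eigenfunction expansions uniformly small, which turns this into
convergence in `C([0,∞), H)`. The limit selection is admissible because, for a function `r` on
`(0,1)`, the pointwise condition `r ∈ β H₀(u) + w u` is equivalent to a family of inequalities
that are linear in `r` and continuous in `u`, `β` and `w`, and these survive weak limits.
-/

section

open Filter Topology
open scoped RealInnerProductSpace

/-- `F` is a primitive of `f` on `[a, b]` in the sense of the Lebesgue (Bochner) integral, that is,
`F` is absolutely continuous there with derivative `f` almost everywhere. -/
structure IsPrimitiveOn {E : Type*} [NormedAddCommGroup E] [NormedSpace ℝ E]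
    (F f : ℝ → E) (a b : ℝ) : Prop where
  intervalIntegrable : IntervalIntegrable f volume a b
  eq_add : ∀ x ∈ Icc a b, F x = F a + ∫ s in a..x, f s

namespace IsPrimitiveOn

variable {E : Type*} [NormedAddCommGroup E] [NormedSpace ℝ E] {F G f g : ℝ → E} {a b : ℝ}

theorem mono_right (h : IsPrimitiveOn F f a b) {c : ℝ} (hc : c ∈ Icc a b) : IsPrimitiveOn F f a c :=
  ⟨h.intervalIntegrable.mono_set <| by
      simpa only [uIcc_of_le hc.1, uIcc_of_le (hc.1.trans hc.2)] using Icc_subset_Icc_right hc.2,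
    fun x hx => h.eq_add x ⟨hx.1, hx.2.trans hc.2⟩⟩

theorem mono_left (h : IsPrimitiveOn F f a b) {c : ℝ} (hc : c ∈ Icc a b) :
    IsPrimitiveOn F f c b where
  intervalIntegrable := h.intervalIntegrable.mono_set <| by
    simpa only [uIcc_of_le hc.2, uIcc_of_le (hc.1.trans hc.2)] using Icc_subset_Icc_left hc.1
  eq_add x hx := by
    have hac := (h.mono_right hc).intervalIntegrable
    have hax := (h.mono_right ⟨hc.1.trans hx.1, hx.2⟩).intervalIntegrable
    rw [h.eq_add x ⟨hc.1.trans hx.1, hx.2⟩, h.eq_add c hc, add_assoc,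
      intervalIntegral.integral_add_adjacent_intervals hac (hac.symm.trans hax)]

theorem integral_eq_sub (h : IsPrimitiveOn F f a b) (hab : a ≤ b) :
    ∫ s in a..b, f s = F b - F a :=
  eq_sub_of_add_eq' (h.eq_add b ⟨hab, le_rfl⟩).symm

theorem continuousOn (h : IsPrimitiveOn F f a b) : ContinuousOn F (Icc a b) := by
  rcases le_or_gt a b with hab | hab
  · rw [← uIcc_of_le hab]
    refine ((continuousOn_const (c := F a)).add
      (intervalIntegral.continuousOn_primitive_interval' h.intervalIntegrable left_mem_uIcc)).congr
      fun x hx => h.eq_add x (by rwa [← uIcc_of_le hab])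
  · simp only [Icc_eq_empty hab.not_ge, continuousOn_empty]

theorem const_add_integral (hf : IntervalIntegrable f volume a b) (c : E) :
    IsPrimitiveOn (fun x => c + ∫ s in a..x, f s) f a b :=
  ⟨hf, fun x _ => by simp only [intervalIntegral.integral_same, add_zero]⟩

theorem of_hasDerivAt_Ioo [CompleteSpace E] (hF : ContinuousOn F (Icc a b))
    (hderiv : ∀ x ∈ Ioo a b, HasDerivAt F (f x) x) (hf : IntervalIntegrable f volume a b) :
    IsPrimitiveOn F f a b where
  intervalIntegrable := hf
  eq_add x hx := by
    have hsub : uIcc a x ⊆ uIcc a b := by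
      simpa only [uIcc_of_le hx.1, uIcc_of_le (hx.1.trans hx.2)] using Icc_subset_Icc_right hx.2
    rw [intervalIntegral.integral_eq_sub_of_hasDerivAt_of_le hx.1
      (hF.mono (Icc_subset_Icc_right hx.2)) (fun y hy => hderiv y ⟨hy.1, hy.2.trans_le hx.2⟩)
      (hf.mono_set hsub), add_sub_cancel]

theorem of_hasDerivAt [CompleteSpace E] (hF : ∀ x, HasDerivAt F (f x) x) (hf : Continuous f) :
    IsPrimitiveOn F f a b :=
  of_hasDerivAt_Ioo (fun x _ => (hF x).continuousAt.continuousWithinAt) (fun x _ => hF x)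
    (hf.intervalIntegrable _ _)

theorem hasDerivAt [CompleteSpace E] (h : IsPrimitiveOn F f a b) (hf : ContinuousOn f (Icc a b))
    {x : ℝ} (hx : x ∈ Ioo a b) : HasDerivAt F (f x) x := by
  have hnhds : Ioo a b ∈ 𝓝 x := isOpen_Ioo.mem_nhds hx
  have hfx : ContinuousAt f x := hf.continuousAt (mem_of_superset hnhds Ioo_subset_Icc_self)
  have hmeas : StronglyMeasurableAtFilter f (𝓝 x) :=
    (hf.mono Ioo_subset_Icc_self).stronglyMeasurableAtFilter isOpen_Ioo x hx
  refine ((intervalIntegral.integral_hasDerivAt_right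
    (h.mono_right (Ioo_subset_Icc_self hx)).intervalIntegrable hmeas hfx).const_add
      (F a)).congr_of_eventuallyEq ?_
  filter_upwards [hnhds] with y hy using h.eq_add y (Ioo_subset_Icc_self hy)

theorem congr_ae (h : IsPrimitiveOn F f a b) (hab : a ≤ b)
    (hfg : f =ᵐ[volume.restrict (Ioc a b)] g) : IsPrimitiveOn F g a b := by
  rw [← uIoc_of_le hab] at hfg
  refine ⟨h.intervalIntegrable.congr_ae hfg, fun x hx => ?_⟩
  rw [h.eq_add x hx]
  congr 1
  refine intervalIntegral.integral_congr_ae_restrict (ae_mono (Measure.restrict_mono ?_ le_rfl) hfg)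
  simpa only [uIoc_of_le hab, uIoc_of_le hx.1] using Ioc_subset_Ioc_right hx.2

theorem of_forall_Ioo (hab : a < b) (hF : ContinuousOn F (Icc a b))
    (hf : IntervalIntegrable f volume a b) (h : ∀ c ∈ Ioo a b, IsPrimitiveOn F f c b) :
    IsPrimitiveOn F f a b := by
  have hcont : ContinuousOn (fun c => F c + ∫ s in c..b, f s) (Icc a b) := by
    refine hF.add ?_
    rw [← uIcc_of_le hab.le]
    exact intervalIntegral.continuousOn_primitive_interval_left ((intervalIntegrable_iff'
      (by simp)).1 hf)
  have hconst : EqOn (fun c => F c + ∫ s in c..b, f s) (fun _ => F b) (Icc a b) := by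
    refine EqOn.of_subset_closure (s := Ioo a b) (fun c hc => ?_) hcont continuousOn_const
      Ioo_subset_Icc_self (closure_Ioo hab.ne).ge
    exact ((h c hc).eq_add b (right_mem_Icc.2 hc.2.le)).symm
  refine ⟨hf, fun x hx => ?_⟩
  have hax : IntervalIntegrable f volume a x := hf.mono_set <| by
    simpa only [uIcc_of_le hx.1, uIcc_of_le hab.le] using Icc_subset_Icc_right hx.2
  have hxb : IntervalIntegrable f volume x b := hax.symm.trans hf
  have ha := hconst (left_mem_Icc.2 hab.le)
  simp only [← intervalIntegral.integral_add_adjacent_intervals hax hxb, ← hconst hx,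
    ← add_assoc] at ha
  exact (add_right_cancel ha).symm

theorem comp_continuousLinearMap {E' : Type*} [NormedAddCommGroup E'] [NormedSpace ℝ E']
    [CompleteSpace E] [CompleteSpace E'] (h : IsPrimitiveOn F f a b) (L : E →L[ℝ] E') :
    IsPrimitiveOn (fun x => L (F x)) (fun x => L (f x)) a b where
  intervalIntegrable :=
    ⟨L.integrable_comp h.intervalIntegrable.1, L.integrable_comp h.intervalIntegrable.2⟩
  eq_add x hx := by
    have hf := (h.mono_right hx).intervalIntegrable
    rw [h.eq_add x hx, map_add, L.intervalIntegral_comp_comm hf]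

theorem sub (hF : IsPrimitiveOn F f a b) (hG : IsPrimitiveOn G g a b) :
    IsPrimitiveOn (fun x => F x - G x) (fun x => f x - g x) a b where
  intervalIntegrable := hF.intervalIntegrable.sub hG.intervalIntegrable
  eq_add x hx := by
    rw [hF.eq_add x hx, hG.eq_add x hx, intervalIntegral.integral_sub
      (hF.mono_right hx).intervalIntegrable (hG.mono_right hx).intervalIntegrable]
    abel

end IsPrimitiveOn

namespace IsPrimitiveOn

variable {F G f g : ℝ → ℝ} {a b : ℝ}

theorem exists_absolutelyContinuousOnInterval (h : IsPrimitiveOn F f a b) (hab : a ≤ b) :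
    ∃ F' : ℝ → ℝ, AbsolutelyContinuousOnInterval F' a b ∧ EqOn F F' (Icc a b) ∧
      ∀ᵐ x, x ∈ Icc a b → deriv F' x = f x := by
  refine ⟨fun x => F a + ∫ s in a..x, f s, ?_, h.eq_add, ?_⟩
  · exact (LipschitzWith.const (F a)).lipschitzOnWith.absolutelyContinuousOnInterval.fun_add
      (h.intervalIntegrable.absolutelyContinuousOnInterval_intervalIntegral left_mem_uIcc)
  · filter_upwards [h.intervalIntegrable.ae_hasDerivAt_integral] with x hx hxm
    rw [← uIcc_of_le hab] at hxm
    exact ((hx hxm a left_mem_uIcc).const_add (F a)).deriv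

theorem integral_deriv_mul_eq_sub (hF : IsPrimitiveOn F f a b) (hG : IsPrimitiveOn G g a b)
    (hab : a ≤ b) : ∫ s in a..b, (f s * G s + F s * g s) = F b * G b - F a * G a := by
  obtain ⟨F', hF'ac, hFF', hF'⟩ := hF.exists_absolutelyContinuousOnInterval hab
  obtain ⟨G', hG'ac, hGG', hG'⟩ := hG.exists_absolutelyContinuousOnInterval hab
  have ha : a ∈ Icc a b := left_mem_Icc.2 hab
  have hb : b ∈ Icc a b := right_mem_Icc.2 hab
  rw [hFF' ha, hFF' hb, hGG' ha, hGG' hb, ← hF'ac.integral_deriv_mul_eq_sub hG'ac]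
  refine intervalIntegral.integral_congr_ae ?_
  filter_upwards [hF', hG'] with x hxF hxG hx
  have hx' : x ∈ Icc a b := by simpa only [uIcc_of_le hab] using uIoc_subset_uIcc hx
  rw [hxF hx', hxG hx', hFF' hx', hGG' hx']

theorem mul (hF : IsPrimitiveOn F f a b) (hG : IsPrimitiveOn G g a b) (hab : a ≤ b) :
    IsPrimitiveOn (fun x => F x * G x) (fun x => f x * G x + F x * g x) a b where
  intervalIntegrable :=
    (hF.intervalIntegrable.mul_continuousOn (by
      simpa only [uIcc_of_le hab] using hG.continuousOn)).add
      (hG.intervalIntegrable.continuousOn_mul (by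
        simpa only [uIcc_of_le hab] using hF.continuousOn))
  eq_add x hx := by
    rw [(hF.mono_right hx).integral_deriv_mul_eq_sub (hG.mono_right hx) hx.1, add_sub_cancel]

theorem weighted_energy_le {c ρ φ φ' : ℝ → ℝ} {l : ℝ} (hl : 0 < l)
    (hc : IsPrimitiveOn c (fun s => ρ s - l * c s) a b) (hφ : IsPrimitiveOn φ φ' a b)
    (hφ0 : ∀ s ∈ Icc a b, 0 ≤ φ s) (hρ : IntervalIntegrable (fun s => ρ s ^ 2) volume a b)
    (hab : a ≤ b) :
    φ b * c b ^ 2 + l * ∫ s in a..b, φ s * c s ^ 2 ≤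
      φ a * c a ^ 2 + (∫ s in a..b, φ' s * c s ^ 2) + l⁻¹ * ∫ s in a..b, φ s * ρ s ^ 2 := by
  have hcont : ContinuousOn c (uIcc a b) := by simpa only [uIcc_of_le hab] using hc.continuousOn
  have hφcont : ContinuousOn φ (uIcc a b) := by simpa only [uIcc_of_le hab] using hφ.continuousOn
  have hder := hφ.mul (hc.mul hc hab) hab
  have hφc : IntervalIntegrable (fun s => φ s * c s ^ 2) volume a b :=
    (hφcont.mul (hcont.pow 2)).intervalIntegrable
  have hφ'c : IntervalIntegrable (fun s => φ' s * c s ^ 2) volume a b :=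
    hφ.intervalIntegrable.mul_continuousOn (hcont.pow 2)
  have hφρ : IntervalIntegrable (fun s => φ s * ρ s ^ 2) volume a b := hρ.continuousOn_mul hφcont
  have young (s : ℝ) : 2 * (c s * (ρ s - l * c s)) ≤ l⁻¹ * ρ s ^ 2 - l * c s ^ 2 := by
    have : l⁻¹ * ρ s ^ 2 - l * c s ^ 2 - 2 * (c s * (ρ s - l * c s)) =
        l⁻¹ * (ρ s - l * c s) ^ 2 := by
      field_simp
      ring
    linarith [mul_nonneg (inv_nonneg.2 hl.le) (sq_nonneg (ρ s - l * c s))]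
  have hle : φ b * (c b * c b) - φ a * (c a * c a) ≤
      ∫ s in a..b, (φ' s * c s ^ 2 + l⁻¹ * (φ s * ρ s ^ 2) - l * (φ s * c s ^ 2)) := by
    rw [← hder.integral_eq_sub hab]
    refine intervalIntegral.integral_mono_on hab hder.intervalIntegrable
      ((hφ'c.add (hφρ.const_mul _)).sub (hφc.const_mul _)) fun s hs => ?_
    linarith [mul_le_mul_of_nonneg_left (young s) (hφ0 s hs)]
  rw [intervalIntegral.integral_sub (hφ'c.add (hφρ.const_mul _)) (hφc.const_mul _),
    intervalIntegral.integral_add hφ'c (hφρ.const_mul _), intervalIntegral.integral_const_mul,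
    intervalIntegral.integral_const_mul] at hle
  linarith

theorem energy_le {c ρ : ℝ → ℝ} {l : ℝ} (hl : 0 < l)
    (hc : IsPrimitiveOn c (fun s => ρ s - l * c s) a b)
    (hρ : IntervalIntegrable (fun s => ρ s ^ 2) volume a b) (hab : a ≤ b) :
    c b ^ 2 + l * ∫ s in a..b, c s ^ 2 ≤ c a ^ 2 + l⁻¹ * ∫ s in a..b, ρ s ^ 2 := by
  simpa using hc.weighted_energy_le hl (φ := fun _ => 1) (φ' := fun _ => 0)
    (.of_hasDerivAt (fun x => hasDerivAt_const x 1) continuous_const) (fun _ _ => zero_le_one)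
    hρ hab

/-- The weight `s` absorbs the initial value, whence a bound on `l c` that is uniform in `l`. -/
theorem integral_mul_sq_le {c ρ : ℝ → ℝ} {l T : ℝ} (hl : 0 < l)
    (hc : IsPrimitiveOn c (fun s => ρ s - l * c s) 0 T)
    (hρ : IntervalIntegrable (fun s => ρ s ^ 2) volume 0 T) (hT : 0 ≤ T) :
    ∫ s in (0 : ℝ)..T, s * (l * c s) ^ 2 ≤ c 0 ^ 2 + (l⁻¹ + T) * ∫ s in (0 : ℝ)..T, ρ s ^ 2 := by
  have henergy := hc.energy_le hl hρ hT
  have hweighted := hc.weighted_energy_le hl (φ := id) (φ' := fun _ => 1)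
    (.of_hasDerivAt hasDerivAt_id continuous_const) (fun s hs => hs.1) hρ hT
  have hsρ : ∫ s in (0 : ℝ)..T, s * ρ s ^ 2 ≤ T * ∫ s in (0 : ℝ)..T, ρ s ^ 2 := by
    rw [← intervalIntegral.integral_const_mul]
    exact intervalIntegral.integral_mono_on hT (hρ.continuousOn_mul continuousOn_id)
      (hρ.const_mul T) fun s hs => mul_le_mul_of_nonneg_right hs.2 (sq_nonneg _)
  simp only [id, one_mul, zero_mul, zero_add] at hweighted
  have hl' : ∫ s in (0 : ℝ)..T, s * (l * c s) ^ 2 = l * (l * ∫ s in (0 : ℝ)..T, s * c s ^ 2) := by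
    simp only [← intervalIntegral.integral_const_mul]
    congr with s
    ring
  have hmul := mul_le_mul_of_nonneg_left
    (hweighted.trans (add_le_add_right (mul_le_mul_of_nonneg_left hsρ (inv_nonneg.2 hl.le)) _))
    hl.le
  rw [mul_add, mul_add l (∫ _ in _..T, c _ ^ 2), mul_inv_cancel_left₀ hl.ne'] at hmul
  rw [hl', add_mul]
  linarith [mul_nonneg hl.le (mul_nonneg hT (sq_nonneg (c T))), sq_nonneg (c T)]

end IsPrimitiveOn

theorem le_mul_exp_of_le_add_mul_integral {y : ℝ → ℝ} {A B T : ℝ} (hB : 0 ≤ B)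
    (hy : ContinuousOn y (Icc 0 T))
    (h : ∀ t ∈ Icc 0 T, y t ≤ A + B * ∫ s in (0 : ℝ)..t, y s) {t : ℝ} (ht : t ∈ Icc 0 T) :
    y t ≤ A * Real.exp (B * t) := by
  have hT : 0 ≤ T := ht.1.trans ht.2
  have hyi : IntervalIntegrable y volume 0 T := by
    rw [← uIcc_of_le hT] at hy
    exact hy.intervalIntegrable
  have hcont : ContinuousOn (fun t => A + B * ∫ s in (0 : ℝ)..t, y s) (Icc 0 T) := by
    rw [← uIcc_of_le hT]
    exact continuousOn_const.add (continuousOn_const.mul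
      (intervalIntegral.continuousOn_primitive_interval' hyi left_mem_uIcc))
  have hderiv : ∀ x ∈ Ico 0 T,
      HasDerivWithinAt (fun t => A + B * ∫ s in (0 : ℝ)..t, y s) (B * y x) (Ici x) x := by
    intro x hx
    have hxT : x ∈ Icc 0 T := Ico_subset_Icc_self hx
    have hx0 : IntervalIntegrable y volume 0 x := hyi.mono_set <| by
      simpa only [uIcc_of_le hT, uIcc_of_le hx.1] using Icc_subset_Icc_right hxT.2
    refine ((intervalIntegral.integral_hasDerivWithinAt_right hx0 (t := Ioi x) ?_ ?_).const_mul B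
      ).const_add A
    · exact (hy.mono (Icc_subset_Icc_left hx.1)).stronglyMeasurableAtFilter_nhdsWithin
        measurableSet_Icc x |>.filter_mono (nhdsWithin_le_of_mem (Icc_mem_nhdsGT hx.2))
    · exact (hy x hxT).mono_of_mem_nhdsWithin (Icc_mem_nhdsGT_of_mem hx)
  have hbound := le_gronwallBound_of_liminf_deriv_right_le (K := B) (ε := 0) (δ := A) hcont
    (fun x hx _ hr => (hderiv x hx).liminf_right_slope_le hr) (by simp)
    (fun x hx => by simpa using mul_le_mul_of_nonneg_left (h x (Ico_subset_Icc_self hx)) hB) t ht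
  rw [gronwallBound_ε0, sub_zero] at hbound
  exact (h t ht).trans hbound

section WeakConvergence

variable {E : Type*} [NormedAddCommGroup E]

theorem iUnion_Ioc_zero_natCast : ⋃ n : ℕ, Ioc (0 : ℝ) n = Ioi 0 :=
  iUnion_Ioc_eq_Ioi_self_iff.2 fun x _ => exists_nat_ge x

theorem ae_restrict_Ioi_zero_iff {p : ℝ → Prop} :
    (∀ᵐ t ∂volume.restrict (Ioi 0), p t) ↔ ∀ n : ℕ, ∀ᵐ t ∂volume.restrict (Ioc 0 (n : ℝ)), p t := by
  rw [← iUnion_Ioc_zero_natCast, ae_restrict_iUnion_iff]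

/-- `r : (0, ∞) → E` is square integrable on every `(0, T]`. -/
def LocallyL2 (r : ℝ → E) : Prop :=
  ∀ T, MemLp r 2 (volume.restrict (Ioc 0 T))

/-- The functions `rn n : (0, ∞) → E` are essentially bounded on every `(0, T]`, uniformly in
`n`. -/
def UniformlyLocallyBounded (rn : ℕ → ℝ → E) : Prop :=
  ∀ T, ∃ C, ∀ n, ∀ᵐ t ∂volume.restrict (Ioc 0 T), ‖rn n t‖ ≤ C

theorem LocallyL2.sub {r r' : ℝ → E} (h : LocallyL2 r) (h' : LocallyL2 r') :
    LocallyL2 fun t => r t - r' t :=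
  fun T => (h T).sub (h' T)

theorem LocallyL2.intervalIntegrable {r : ℝ → E} (h : LocallyL2 r) {T : ℝ} (hT : 0 ≤ T) :
    IntervalIntegrable r volume 0 T :=
  (intervalIntegrable_iff_integrableOn_Ioc_of_le hT).2 ((h T).integrable one_le_two)

theorem LocallyL2.intervalIntegrable_norm_sq {r : ℝ → E} (h : LocallyL2 r) {T : ℝ} (hT : 0 ≤ T) :
    IntervalIntegrable (fun s => ‖r s‖ ^ 2) volume 0 T :=
  (intervalIntegrable_iff_integrableOn_Ioc_of_le hT).2
    ((memLp_two_iff_integrable_sq_norm (h T).1).1 (h T))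

theorem LocallyL2.intervalIntegrable_sq {r : ℝ → ℝ} (h : LocallyL2 r) {T : ℝ} (hT : 0 ≤ T) :
    IntervalIntegrable (fun s => r s ^ 2) volume 0 T := by
  simpa only [Real.norm_eq_abs, sq_abs] using h.intervalIntegrable_norm_sq hT

theorem LocallyL2.aestronglyMeasurable {r : ℝ → E} (h : LocallyL2 r) :
    AEStronglyMeasurable r (volume.restrict (Ioi 0)) := by
  rw [← iUnion_Ioc_zero_natCast, aestronglyMeasurable_iUnion_iff]
  exact fun n => (h n).1

theorem UniformlyLocallyBounded.exists_monotone_norm_le {rn : ℕ → ℝ → E}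
    (h : UniformlyLocallyBounded rn) :
    ∃ p : ℝ → ℝ, Monotone p ∧ (∀ t, 0 < p t) ∧
      ∀ n, ∀ᵐ t ∂volume.restrict (Ioi 0), ‖rn n t‖ ≤ p t * Real.exp (-t) := by
  choose C hC using fun N : ℕ => h N
  refine ⟨fun t => (1 + ∑ i ∈ Finset.range (⌈t⌉₊ + 1), |C i|) * Real.exp t, ?_,
    fun t => by positivity, fun n => ?_⟩
  · refine Monotone.mul (fun s t hst => ?_) Real.exp_monotone (fun t => by positivity)
      fun t => (Real.exp_pos t).le
    gcongr
  · have hall : ∀ᵐ t, ∀ N : ℕ, t ∈ Ioc (0 : ℝ) N → ‖rn n t‖ ≤ C N :=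
      ae_all_iff.2 fun N => (ae_restrict_iff' measurableSet_Ioc).1 (hC N n)
    filter_upwards [ae_restrict_of_ae hall, ae_restrict_mem measurableSet_Ioi] with t ht ht0
    have hsum : |C ⌈t⌉₊| ≤ ∑ i ∈ Finset.range (⌈t⌉₊ + 1), |C i| :=
      Finset.single_le_sum (f := fun i => |C i|) (fun _ _ => abs_nonneg _) (by simp)
    rw [mul_assoc, ← Real.exp_add, add_neg_cancel, Real.exp_zero, mul_one]
    linarith [ht _ ⟨ht0, Nat.le_ceil t⟩, le_abs_self (C ⌈t⌉₊)]

theorem memLp_smul_of_monotone [NormedSpace ℝ E] {p : ℝ → ℝ} (hp : Monotone p)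
    (hp0 : ∀ t, 0 < p t) {q : ENNReal} {g : ℝ → E} {a b : ℝ}
    (hg : MemLp g q (volume.restrict (Ioc a b))) :
    MemLp (fun t => p t • g t) q (volume.restrict (Ioc a b)) := by
  refine hg.of_le_mul (c := p b) (hp.measurable.aestronglyMeasurable.smul hg.1) ?_
  filter_upwards [ae_restrict_mem measurableSet_Ioc] with t ht
  rw [norm_smul, Real.norm_of_nonneg (hp0 t).le]
  exact mul_le_mul_of_nonneg_right (hp ht.2) (norm_nonneg _)

variable [InnerProductSpace ℝ E]

theorem LocallyL2.inner_left {r : ℝ → E} (h : LocallyL2 r) (v : E) :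
    LocallyL2 fun t => ⟪v, r t⟫ :=
  fun T => (innerSL ℝ v).comp_memLp' (h T)

/-- Weak convergence in `L²(0, T; E)` for every `T`. -/
def TendstoWeakly (rn : ℕ → ℝ → E) (r : ℝ → E) : Prop :=
  ∀ (T : ℝ) (g : ℝ → E), MemLp g 2 (volume.restrict (Ioc 0 T)) →
    Tendsto (fun n => ∫ s in Ioc 0 T, ⟪rn n s, g s⟫) atTop (𝓝 (∫ s in Ioc 0 T, ⟪r s, g s⟫))

theorem integrable_inner_of_memLp {α : Type*} [MeasurableSpace α] {μ : Measure α} {f g : α → E}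
    (hf : MemLp f 2 μ) (hg : MemLp g 2 μ) : Integrable (fun s => ⟪f s, g s⟫) μ := by
  refine (L2.integrable_inner (𝕜 := ℝ) (hf.toLp f) (hg.toLp g)).congr ?_
  filter_upwards [hf.coeFn_toLp, hg.coeFn_toLp] with t hft hgt
  rw [hft, hgt]

theorem exists_subseq_tendsto_inner [CompleteSpace E] [TopologicalSpace.SeparableSpace E]
    {x : ℕ → E} {C : ℝ} (hx : ∀ n, ‖x n‖ ≤ C) :
    ∃ φ : ℕ → ℕ, StrictMono φ ∧ ∃ a : E, ∀ v, Tendsto (fun n => ⟪x (φ n), v⟫) atTop (𝓝 ⟪a, v⟫) := by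
  obtain ⟨a, -, φ, hφ, ha⟩ := WeakDual.isSeqCompact_closedBall ℝ E 0 C
    (x := fun n => StrongDual.toWeakDual (InnerProductSpace.toDual ℝ E (x n))) fun n => by
      change InnerProductSpace.toDual ℝ E (x n) ∈ Metric.closedBall 0 C
      rw [mem_closedBall_zero_iff, LinearIsometryEquiv.norm_map]
      exact hx n
  refine ⟨φ, hφ, (InnerProductSpace.toDual ℝ E).symm (WeakDual.toStrongDual a), fun v => ?_⟩
  rw [InnerProductSpace.toDual_symm_apply]
  exact (WeakBilin.tendsto_iff_forall_eval_tendsto _ ContinuousLinearMap.coe_injective).1 ha v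

theorem inner_toLp_indicator_smul {p : ℝ → ℝ} {T : ℝ} {f g : ℝ → E}
    (q : Lp E 2 (volume.restrict (Ioi (0 : ℝ))))
    (hf : ∀ᵐ t ∂volume.restrict (Ioi 0), f t = p t • q t)
    (hg : MemLp ((Ioc 0 T).indicator fun t => p t • g t) 2 (volume.restrict (Ioi 0))) :
    ⟪q, hg.toLp _⟫ = ∫ s in Ioc 0 T, ⟪f s, g s⟫ := by
  have hset : (volume.restrict (Ioi (0 : ℝ))).restrict (Ioc 0 T) = volume.restrict (Ioc 0 T) := by
    rw [Measure.restrict_restrict measurableSet_Ioc, inter_eq_left.2 Ioc_subset_Ioi_self]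
  rw [L2.inner_def, ← hset, ← integral_indicator measurableSet_Ioc]
  refine integral_congr_ae ?_
  filter_upwards [hf, hg.coeFn_toLp] with t hft hgt
  rw [hgt]
  by_cases ht : t ∈ Ioc 0 T
  · rw [indicator_of_mem ht, indicator_of_mem ht, hft, real_inner_smul_left, real_inner_smul_right]
  · rw [indicator_of_notMem ht, indicator_of_notMem ht, inner_zero_right]

/-- Dividing by a weight `p` that grows fast enough turns a locally bounded sequence into a bounded
sequence of `L²(0, ∞; E)`, so that no diagonal argument over `T` is needed. -/
theorem UniformlyLocallyBounded.exists_subseq_tendstoWeakly [CompleteSpace E]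
    [TopologicalSpace.SeparableSpace E] {rn : ℕ → ℝ → E} (hb : UniformlyLocallyBounded rn)
    (hrn : ∀ n, LocallyL2 (rn n)) :
    ∃ φ : ℕ → ℕ, StrictMono φ ∧ ∃ r, LocallyL2 r ∧ TendstoWeakly (fun n => rn (φ n)) r := by
  have : Fact ((2 : ENNReal) ≠ ⊤) := ⟨ENNReal.ofNat_ne_top⟩
  obtain ⟨p, hpmono, hp0, hp⟩ := hb.exists_monotone_norm_le
  have hexp : MemLp (fun t : ℝ => Real.exp (-t)) 2 (volume.restrict (Ioi (0 : ℝ))) := by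
    rw [memLp_two_iff_integrable_sq (by fun_prop)]
    simpa only [← Real.exp_nat_mul, Nat.cast_ofNat, neg_mul, mul_neg, IntegrableOn] using
      exp_neg_integrableOn_Ioi 0 (b := 2) two_pos
  have hle (n) : ∀ᵐ t ∂volume.restrict (Ioi 0), ‖(p t)⁻¹ • rn n t‖ ≤ ‖Real.exp (-t)‖ := by
    filter_upwards [hp n] with t ht
    rwa [norm_smul, norm_inv, Real.norm_of_nonneg (hp0 t).le,
      Real.norm_of_nonneg (Real.exp_pos _).le, inv_mul_le_iff₀ (hp0 t)]
  have hmem (n) : MemLp (fun t => (p t)⁻¹ • rn n t) 2 (volume.restrict (Ioi 0)) :=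
    hexp.mono (hpmono.measurable.inv.aestronglyMeasurable.smul (hrn n).aestronglyMeasurable) (hle n)
  obtain ⟨φ, hφ, q, hq⟩ := exists_subseq_tendsto_inner (x := fun n => (hmem n).toLp _)
    (C := ‖hexp.toLp _‖) fun n => by
      refine Lp.norm_le_norm_of_ae_le ?_
      filter_upwards [(hmem n).coeFn_toLp, hexp.coeFn_toLp, hle n] with t hn hexpt hlet
      rwa [hn, hexpt]
  refine ⟨φ, hφ, fun t => p t • q t, fun T => memLp_smul_of_monotone hpmono hp0
    ((Lp.memLp q).mono_measure (Measure.restrict_mono Ioc_subset_Ioi_self le_rfl)),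
    fun T g hg => ?_⟩
  have hpg : MemLp ((Ioc 0 T).indicator fun t => p t • g t) 2 (volume.restrict (Ioi 0)) := by
    rw [memLp_indicator_iff_restrict measurableSet_Ioc, Measure.restrict_restrict measurableSet_Ioc,
      inter_eq_left.2 Ioc_subset_Ioi_self]
    exact memLp_smul_of_monotone hpmono hp0 hg
  rw [← inner_toLp_indicator_smul q (ae_of_all _ fun _ => rfl) hpg]
  refine (hq (hpg.toLp _)).congr fun n => inner_toLp_indicator_smul _ ?_ hpg
  filter_upwards [(hmem (φ n)).coeFn_toLp] with t ht
  rw [ht, smul_inv_smul₀ (hp0 t).ne']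

end WeakConvergence

section HilbertBasisExpansion

variable {ι α E : Type*} [MeasurableSpace α] {μ : Measure α} [NormedAddCommGroup E]
  [InnerProductSpace ℝ E]

theorem hasSum_inner_sq (e : HilbertBasis ι ℝ E) (x : E) :
    HasSum (fun k => ⟪e k, x⟫ ^ 2) (‖x‖ ^ 2) := by
  simpa only [real_inner_self_eq_norm_sq, real_inner_comm, ← sq] using e.hasSum_inner_mul_inner x x

theorem sum_inner_sq_le (e : HilbertBasis ι ℝ E) (x : E) (s : Finset ι) :
    ∑ k ∈ s, ⟪e k, x⟫ ^ 2 ≤ ‖x‖ ^ 2 :=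
  sum_le_hasSum s (fun _ _ => sq_nonneg _) (hasSum_inner_sq e x)

theorem eq_of_forall_inner_eq (e : HilbertBasis ι ℝ E) {x y : E} (h : ∀ k, ⟪e k, x⟫ = ⟪e k, y⟫) :
    x = y :=
  e.repr.injective <| lp.ext <| funext fun k => by simpa only [e.repr_apply_apply] using h k

theorem exists_inner_eq_of_summable_sq (e : HilbertBasis ι ℝ E) {a : ι → ℝ}
    (ha : Summable fun k => a k ^ 2) : ∃ x, ∀ k, ⟪e k, x⟫ = a k := by
  have hmem : Memℓp a 2 := (memℓp_gen_iff (by norm_num)).2 (by simpa using ha)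
  exact ⟨e.repr.symm ⟨a, hmem⟩, fun k => by
    rw [← e.repr_apply_apply, LinearIsometryEquiv.apply_symm_apply]⟩

theorem exists_integrable_hasSum_of_sum_integral_le [Countable ι] {q : ι → α → ℝ}
    (hq : ∀ k, Integrable (q k) μ) (hq0 : ∀ k t, 0 ≤ q k t) {C : ℝ}
    (hC : ∀ s : Finset ι, ∑ k ∈ s, ∫ t, q k t ∂μ ≤ C) :
    ∃ Q, Integrable Q μ ∧ ∀ᵐ t ∂μ, HasSum (fun k => q k t) (Q t) := by
  have hmeas (k) : AEMeasurable (fun t => ENNReal.ofReal (q k t)) μ :=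
    (hq k).aestronglyMeasurable.aemeasurable.ennreal_ofReal
  have hfin : ∫⁻ t, ∑' k, ENNReal.ofReal (q k t) ∂μ ≠ ⊤ := by
    rw [lintegral_tsum hmeas]
    refine ne_top_of_le_ne_top (ENNReal.ofReal_ne_top (r := C)) ?_
    rw [ENNReal.tsum_eq_iSup_sum]
    refine iSup_le fun s => ?_
    simp only [← ofReal_integral_eq_lintegral_ofReal (hq _) (ae_of_all _ (hq0 _))]
    rw [← ENNReal.ofReal_sum_of_nonneg fun k _ => integral_nonneg (hq0 k)]
    exact ENNReal.ofReal_le_ofReal (hC s)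
  refine ⟨_, integrable_toReal_of_lintegral_ne_top (.tsum hmeas) hfin, ?_⟩
  filter_upwards [ae_lt_top' (.tsum hmeas) hfin] with t ht
  rw [ENNReal.tsum_toReal_eq fun _ => ENNReal.ofReal_ne_top]
  refine (ENNReal.hasSum_toReal ht.ne).congr_fun fun k => ?_
  rw [ENNReal.toReal_ofReal (hq0 k t)]

theorem memLp_tsum_smul [Countable ι] (e : HilbertBasis ι ℝ E) {a : ι → α → ℝ}
    (ha : ∀ k, MemLp (a k) 2 μ) {C : ℝ} (hC : ∀ s : Finset ι, ∑ k ∈ s, ∫ t, a k t ^ 2 ∂μ ≤ C) :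
    MemLp (fun t => ∑' k, a k t • e k) 2 μ ∧ ∀ᵐ t ∂μ, ∀ k, ⟪e k, ∑' j, a j t • e j⟫ = a k t := by
  obtain ⟨Q, hQ, hsum⟩ := exists_integrable_hasSum_of_sum_integral_le
    (fun k => (ha k).integrable_sq) (fun _ _ => sq_nonneg _) hC
  have hexp : ∀ᵐ t ∂μ, HasSum (fun k => a k t • e k) (∑' j, a j t • e j) ∧
      ∀ k, ⟪e k, ∑' j, a j t • e j⟫ = a k t := by
    filter_upwards [hsum] with t ht
    obtain ⟨x, hx⟩ := exists_inner_eq_of_summable_sq e ht.summable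
    have hxsum : HasSum (fun k => a k t • e k) x := by
      simpa only [e.repr_apply_apply, hx] using e.hasSum_repr x
    rw [hxsum.tsum_eq]
    exact ⟨hxsum, hx⟩
  have hmeas : AEStronglyMeasurable (fun t => ∑' k, a k t • e k) μ :=
    aestronglyMeasurable_of_tendsto_ae atTop
      (fun s => Finset.aestronglyMeasurable_fun_sum s fun k _ => (ha k).1.smul_const (e k))
      (hexp.mono fun t ht => ht.1)
  refine ⟨(memLp_two_iff_integrable_sq_norm hmeas).2 (hQ.congr ?_), hexp.mono fun t ht => ht.2⟩
  filter_upwards [hsum, hexp] with t ht hxt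
  refine ht.unique ?_
  simpa only [hxt.2] using hasSum_inner_sq e (∑' j, a j t • e j)

theorem LocallyL2.sum_integral_inner_sq_le {r : ℝ → E} (hr : LocallyL2 r) (e : HilbertBasis ι ℝ E)
    {T : ℝ} (hT : 0 ≤ T) (s : Finset ι) :
    ∑ k ∈ s, ∫ t in (0 : ℝ)..T, ⟪e k, r t⟫ ^ 2 ≤ ∫ t in (0 : ℝ)..T, ‖r t‖ ^ 2 := by
  have hint (k) : IntervalIntegrable (fun t => ⟪e k, r t⟫ ^ 2) volume 0 T :=
    (hr.inner_left (e k)).intervalIntegrable_sq hT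
  rw [← intervalIntegral.integral_finsetSum fun k _ => hint k]
  refine intervalIntegral.integral_mono_on hT ?_ (hr.intervalIntegrable_norm_sq hT)
    fun t _ => sum_inner_sq_le e (r t) s
  simpa only [Finset.sum_fn] using IntervalIntegrable.sum s fun k _ => hint k

theorem IsPrimitiveOn.of_forall_inner [CompleteSpace E] (e : HilbertBasis ι ℝ E) {F f : ℝ → E}
    {a b : ℝ} (hf : IntervalIntegrable f volume a b)
    (h : ∀ k, IsPrimitiveOn (fun t => ⟪e k, F t⟫) (fun t => ⟪e k, f t⟫) a b) :
    IsPrimitiveOn F f a b := by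
  refine ⟨hf, fun x hx => eq_of_forall_inner_eq e fun k => ?_⟩
  have hfx : IntervalIntegrable f volume a x := hf.mono_set <| by
    simpa only [uIcc_of_le hx.1, uIcc_of_le (hx.1.trans hx.2)] using Icc_subset_Icc_right hx.2
  rw [(h k).eq_add x hx, inner_add_right]
  congr 1
  exact (innerSL ℝ (e k)).intervalIntegral_comp_comm hfx

end HilbertBasisExpansion

/-- `u : [0, ∞) → E` is the mild solution of `u' = A u + r`, where `A` is the diagonal operator with
eigenbasis `e` and eigenvalues `-l k`: each coordinate of `u` solves the corresponding scalar
linear equation. -/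
structure IsMildSolution {ι E : Type*} [NormedAddCommGroup E] [InnerProductSpace ℝ E]
    (e : HilbertBasis ι ℝ E) (l : ι → ℝ) (u r : ℝ → E) : Prop where
  continuousOn : ContinuousOn u (Ici 0)
  locallyL2 : LocallyL2 r
  isPrimitiveOn : ∀ k T, 0 ≤ T →
    IsPrimitiveOn (fun t => ⟪e k, u t⟫) (fun t => ⟪e k, r t⟫ - l k * ⟪e k, u t⟫) 0 T

namespace IsMildSolution

variable {ι E : Type*} [NormedAddCommGroup E] [InnerProductSpace ℝ E] {e : HilbertBasis ι ℝ E}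
  {l : ι → ℝ} {u r u' r' : ℝ → E} {L T : ℝ}

theorem sub (h : IsMildSolution e l u r) (h' : IsMildSolution e l u' r') :
    IsMildSolution e l (fun t => u t - u' t) (fun t => r t - r' t) where
  continuousOn := h.continuousOn.sub h'.continuousOn
  locallyL2 := h.locallyL2.sub h'.locallyL2
  isPrimitiveOn k T hT := by
    convert (h.isPrimitiveOn k T hT).sub (h'.isPrimitiveOn k T hT) using 2 with t t
    · rw [inner_sub_right]
    · rw [inner_sub_right, inner_sub_right]
      ring

/-- The finitely many modes in `F`, on which `l` may be small, are kept on the right-hand side. -/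
theorem norm_sq_le (h : IsMildSolution e l u r) (hL : 0 < L) {F : Finset ι}
    (hF : ∀ k ∉ F, L ≤ l k) (hT : 0 ≤ T) :
    ‖u T‖ ^ 2 ≤ ∑ k ∈ F, ⟪e k, u T⟫ ^ 2 + (‖u 0‖ ^ 2 + L⁻¹ * ∫ t in (0 : ℝ)..T, ‖r t‖ ^ 2) := by
  classical
  have hmode (k) (hk : k ∉ F) : ⟪e k, u T⟫ ^ 2 ≤
      ⟪e k, u 0⟫ ^ 2 + L⁻¹ * ∫ t in (0 : ℝ)..T, ⟪e k, r t⟫ ^ 2 := by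
    have hle := (h.isPrimitiveOn k T hT).energy_le (hL.trans_le (hF k hk))
      ((h.locallyL2.inner_left (e k)).intervalIntegrable_sq hT) hT
    have hr0 : 0 ≤ ∫ t in (0 : ℝ)..T, ⟪e k, r t⟫ ^ 2 :=
      intervalIntegral.integral_nonneg hT fun _ _ => sq_nonneg _
    have hu0 : 0 ≤ ∫ t in (0 : ℝ)..T, ⟪e k, u t⟫ ^ 2 :=
      intervalIntegral.integral_nonneg hT fun _ _ => sq_nonneg _
    linarith [mul_le_mul_of_nonneg_right (inv_anti₀ hL (hF k hk)) hr0,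
      mul_nonneg (hL.le.trans (hF k hk)) hu0]
  refine hasSum_le_of_sum_le (hasSum_inner_sq e (u T)) fun s => ?_
  calc ∑ k ∈ s, ⟪e k, u T⟫ ^ 2
      ≤ ∑ k ∈ F, ⟪e k, u T⟫ ^ 2 + ∑ k ∈ s \ F, ⟪e k, u T⟫ ^ 2 := by
        rw [← Finset.sum_union Finset.disjoint_sdiff, Finset.union_sdiff_self_eq_union]
        exact Finset.sum_le_sum_of_subset_of_nonneg Finset.subset_union_right
          fun _ _ _ => sq_nonneg _
    _ ≤ ∑ k ∈ F, ⟪e k, u T⟫ ^ 2 + ∑ k ∈ s \ F,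
          (⟪e k, u 0⟫ ^ 2 + L⁻¹ * ∫ t in (0 : ℝ)..T, ⟪e k, r t⟫ ^ 2) := by
        gcongr with k hk
        exact hmode k (Finset.mem_sdiff.1 hk).2
    _ ≤ _ := by
        rw [Finset.sum_add_distrib, ← Finset.mul_sum]
        gcongr
        · exact sum_inner_sq_le e _ _
        · exact h.locallyL2.sum_integral_inner_sq_le e hT _

theorem norm_sq_le_mul_exp (h : IsMildSolution e l u r) (hL : 0 < L) (hl : ∀ k, L ≤ l k) {β w : ℝ}
    (hr : ∀ᵐ t ∂volume.restrict (Ioc 0 T), ‖r t‖ ≤ β + w * ‖u t‖) {t : ℝ} (ht : t ∈ Icc 0 T) :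
    ‖u t‖ ^ 2 ≤ (‖u 0‖ ^ 2 + L⁻¹ * (2 * β ^ 2 * T)) * Real.exp (L⁻¹ * (2 * w ^ 2) * t) := by
  have hcont (s) : ContinuousOn (fun t => ‖u t‖ ^ 2) (Icc 0 s) :=
    ((h.continuousOn.mono Icc_subset_Ici_self).norm.pow 2)
  refine le_mul_exp_of_le_add_mul_integral (by positivity) (hcont T) (fun s hs => ?_) ht
  have hint : IntervalIntegrable (fun t => ‖u t‖ ^ 2) volume 0 s :=
    ((uIcc_of_le hs.1).symm ▸ hcont s).intervalIntegrable
  have hr2 : ∫ t in (0 : ℝ)..s, ‖r t‖ ^ 2 ≤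
      ∫ t in (0 : ℝ)..s, (2 * β ^ 2 + 2 * w ^ 2 * ‖u t‖ ^ 2) := by
    refine intervalIntegral.integral_mono_ae_restrict hs.1
      (h.locallyL2.intervalIntegrable_norm_sq hs.1)
      (intervalIntegrable_const.add (hint.const_mul _)) ?_
    rw [← Measure.restrict_congr_set Ioc_ae_eq_Icc]
    filter_upwards [ae_restrict_of_ae_restrict_of_subset (Ioc_subset_Ioc_right hs.2) hr] with t ht
    calc ‖r t‖ ^ 2 ≤ (β + w * ‖u t‖) ^ 2 := by gcongr
      _ ≤ 2 * (β ^ 2 + (w * ‖u t‖) ^ 2) := add_sq_le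
      _ = _ := by ring
  rw [intervalIntegral.integral_add intervalIntegrable_const (hint.const_mul _),
    intervalIntegral.integral_const, intervalIntegral.integral_const_mul, sub_zero,
    smul_eq_mul] at hr2
  have hβ : s * (2 * β ^ 2) ≤ 2 * β ^ 2 * T := by
    rw [mul_comm]
    exact mul_le_mul_of_nonneg_left hs.2 (by positivity)
  calc ‖u s‖ ^ 2 ≤ ‖u 0‖ ^ 2 + L⁻¹ * ∫ t in (0 : ℝ)..s, ‖r t‖ ^ 2 := by
        simpa using h.norm_sq_le hL (F := ∅) (fun k _ => hl k) hs.1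
    _ ≤ ‖u 0‖ ^ 2 + L⁻¹ * (2 * β ^ 2 * T + 2 * w ^ 2 * ∫ t in (0 : ℝ)..s, ‖u t‖ ^ 2) := by
        gcongr
        linarith
    _ = _ := by ring

theorem sum_integral_mul_sq_le (h : IsMildSolution e l u r) (hL : 0 < L) (hl : ∀ k, L ≤ l k)
    (hT : 0 ≤ T) (s : Finset ι) :
    ∑ k ∈ s, ∫ t in (0 : ℝ)..T, t * (l k * ⟪e k, u t⟫) ^ 2 ≤
      ‖u 0‖ ^ 2 + (L⁻¹ + T) * ∫ t in (0 : ℝ)..T, ‖r t‖ ^ 2 := by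
  calc ∑ k ∈ s, ∫ t in (0 : ℝ)..T, t * (l k * ⟪e k, u t⟫) ^ 2
      ≤ ∑ k ∈ s, (⟪e k, u 0⟫ ^ 2 + (L⁻¹ + T) * ∫ t in (0 : ℝ)..T, ⟪e k, r t⟫ ^ 2) := by
        refine Finset.sum_le_sum fun k _ => ((h.isPrimitiveOn k T hT).integral_mul_sq_le
          (hL.trans_le (hl k)) ((h.locallyL2.inner_left (e k)).intervalIntegrable_sq hT)
            hT).trans ?_
        have hr0 : 0 ≤ ∫ t in (0 : ℝ)..T, ⟪e k, r t⟫ ^ 2 :=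
          intervalIntegral.integral_nonneg hT fun _ _ => sq_nonneg _
        gcongr
        exact hl k
    _ ≤ _ := by
        rw [Finset.sum_add_distrib, ← Finset.mul_sum]
        gcongr
        · exact sum_inner_sq_le e _ _
        · exact h.locallyL2.sum_integral_inner_sq_le e hT _

/-- Parabolic smoothing: since `u 0` need not be in the domain of `A`, the function `w = A u` may
blow up at `t = 0`, but no faster than the weight `√t` allows. -/
theorem exists_locallyL2_sqrt_smul [Countable ι] (h : IsMildSolution e l u r) (hL : 0 < L)
    (hl : ∀ k, L ≤ l k) :
    ∃ w : ℝ → E, LocallyL2 (fun t => √t • w t) ∧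
      ∀ᵐ t ∂volume.restrict (Ioi 0), ∀ k, ⟪e k, w t⟫ = -l k * ⟪e k, u t⟫ := by
  have hcont (k) (T) : ContinuousOn (fun t => √t * (-l k * ⟪e k, u t⟫)) (Icc 0 T) :=
    Real.continuous_sqrt.continuousOn.mul (continuousOn_const.mul
      (continuousOn_const.inner (h.continuousOn.mono Icc_subset_Ici_self)))
  have hLp (T) (hT : 0 ≤ T) := memLp_tsum_smul (μ := volume.restrict (Ioc 0 T)) e
    (a := fun k t => √t * (-l k * ⟪e k, u t⟫))
    (fun k => (memLp_two_iff_integrable_sq (((hcont k T).mono Ioc_subset_Icc_self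
      ).aestronglyMeasurable measurableSet_Ioc)).2
        (((hcont k T).pow 2).integrableOn_Icc.mono_set Ioc_subset_Icc_self)) fun s => by
    refine (Finset.sum_congr rfl fun k _ => ?_).trans_le (h.sum_integral_mul_sq_le hL hl hT s)
    rw [intervalIntegral.integral_of_le hT]
    refine setIntegral_congr_fun measurableSet_Ioc fun t ht => ?_
    simp only [mul_pow, Real.sq_sqrt ht.1.le, neg_sq]
  refine ⟨fun t => (√t)⁻¹ • ∑' k, (√t * (-l k * ⟪e k, u t⟫)) • e k, fun T => ?_, ?_⟩
  · refine ((hLp (max T 0) (le_max_right _ _)).1.mono_measure (Measure.restrict_mono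
      (Ioc_subset_Ioc_right (le_max_left _ _)) le_rfl)).ae_eq ?_
    filter_upwards [ae_restrict_mem measurableSet_Ioc] with t ht
    rw [smul_inv_smul₀ (Real.sqrt_pos.2 ht.1).ne']
  · refine ae_restrict_Ioi_zero_iff.2 fun n => ?_
    filter_upwards [(hLp n n.cast_nonneg).2, ae_restrict_mem measurableSet_Ioc] with t ht ht0 k
    rw [real_inner_smul_right, ht, inv_mul_cancel_left₀ (Real.sqrt_pos.2 ht0.1).ne']

theorem isPrimitiveOn_add [CompleteSpace E] (h : IsMildSolution e l u r) {w : ℝ → E}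
    (hw : LocallyL2 fun t => √t • w t)
    (hinner : ∀ᵐ t ∂volume.restrict (Ioi 0), ∀ k, ⟪e k, w t⟫ = -l k * ⟪e k, u t⟫)
    {a b : ℝ} (ha : 0 < a) (hab : a ≤ b) : IsPrimitiveOn u (fun t => r t + w t) a b := by
  have hsub : uIcc a b ⊆ uIcc 0 b := by
    rw [uIcc_of_le hab, uIcc_of_le (ha.le.trans hab)]
    exact Icc_subset_Icc_left ha.le
  have hwint : IntervalIntegrable w volume a b := by
    have hsqrt : ContinuousOn (fun t => (√t)⁻¹) (uIcc a b) :=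
      Real.continuous_sqrt.continuousOn.inv₀ fun t ht =>
        (Real.sqrt_pos.2 (ha.trans_le (uIcc_of_le hab ▸ ht).1)).ne'
    refine (((hw.intervalIntegrable (ha.le.trans hab)).mono_set hsub).continuousOn_smul
      hsqrt).congr fun t ht => ?_
    rw [uIoc_of_le hab] at ht
    exact inv_smul_smul₀ (Real.sqrt_pos.2 (ha.trans ht.1)).ne' _
  refine .of_forall_inner e (((h.locallyL2.intervalIntegrable (ha.le.trans hab)).mono_set
    hsub).add hwint) fun k => ?_
  refine ((h.isPrimitiveOn k b (ha.le.trans hab)).mono_left ⟨ha.le, hab⟩).congr_ae hab ?_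
  filter_upwards [ae_restrict_of_ae_restrict_of_subset
    (fun t ht => ha.trans ht.1 : Ioc a b ⊆ Ioi 0) hinner] with t ht
  rw [inner_add_right, ht k, neg_mul, sub_eq_add_neg]

theorem of_isPrimitiveOn_add [CompleteSpace E] (hu : ContinuousOn u (Ici 0)) (hr : LocallyL2 r)
    {w : ℝ → E} (hinner : ∀ᵐ t ∂volume.restrict (Ioi 0), ∀ k, ⟪e k, w t⟫ = -l k * ⟪e k, u t⟫)
    (h : ∀ a b, 0 < a → a < b → IsPrimitiveOn u (fun t => r t + w t) a b) :
    IsMildSolution e l u r where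
  continuousOn := hu
  locallyL2 := hr
  isPrimitiveOn k T hT := by
    rcases hT.eq_or_lt with rfl | hT
    · exact ⟨.refl, fun x hx => by simp [le_antisymm hx.2 hx.1]⟩
    have hcoord : ContinuousOn (fun t => ⟪e k, u t⟫) (Icc 0 T) :=
      continuousOn_const.inner (hu.mono Icc_subset_Ici_self)
    refine .of_forall_Ioo hT hcoord (((hr.inner_left (e k)).intervalIntegrable hT.le).sub
      ((uIcc_of_le hT.le ▸ hcoord).intervalIntegrable.const_mul _)) fun c hc => ?_
    refine ((h c T hc.1 hc.2).comp_continuousLinearMap (innerSL ℝ (e k))).congr_ae hc.2.le ?_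
    filter_upwards [ae_restrict_of_ae_restrict_of_subset
      (fun t ht => hc.1.trans ht.1 : Ioc c T ⊆ Ioi 0) hinner] with t ht
    rw [innerSL_apply_apply, inner_add_right, ht k, neg_mul, sub_eq_add_neg]

end IsMildSolution

section UniformConvergence

theorem tendstoUniformlyOn_of_lipschitzOnWith {α β ι : Type*} [PseudoMetricSpace α]
    [PseudoMetricSpace β] {p : Filter ι} {F : ι → α → β} {f : α → β} {s : Set α} {K : NNReal}
    (hs : IsCompact s) (hF : ∀ i, LipschitzOnWith K (F i) s)
    (h : ∀ x ∈ s, Tendsto (fun i => F i x) p (𝓝 (f x))) : TendstoUniformlyOn F f p s := by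
  have hpi := (EquicontinuousOn.tendsto_uniformOnFun_iff_pi' (𝔖 := {s}) (F := F) (by simpa)
    (by simpa using (LipschitzOnWith.uniformEquicontinuousOn F K hF).equicontinuousOn) p f).2 <|
    tendsto_pi_nhds.2 fun x => h x (by simpa using x.2)
  exact UniformOnFun.tendsto_iff_tendstoUniformlyOn.1 hpi s rfl

theorem IsPrimitiveOn.of_tendsto {E : Type*} [NormedAddCommGroup E] [NormedSpace ℝ E]
    {Fn fn : ℕ → ℝ → E} {F f : ℝ → E} {a b : ℝ} (h : ∀ n, IsPrimitiveOn (Fn n) (fn n) a b)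
    (hf : IntervalIntegrable f volume a b)
    (hF : ∀ t ∈ Icc a b, Tendsto (fun n => Fn n t) atTop (𝓝 (F t))) (hab : a ≤ b)
    (hint : ∀ t ∈ Icc a b,
      Tendsto (fun n => ∫ s in a..t, fn n s) atTop (𝓝 (∫ s in a..t, f s))) :
    IsPrimitiveOn F f a b := by
  refine ⟨hf, fun t ht => tendsto_nhds_unique (hF t ht) ?_⟩
  simpa only [← (h _).eq_add t ht] using (hF a (left_mem_Icc.2 hab)).add (hint t ht)

theorem IsPrimitiveOn.abs_le_mul_exp {d ρ : ℝ → ℝ} {l δ T : ℝ}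
    (hd : IsPrimitiveOn d (fun t => ρ t - l * d t) 0 T) (hρ : IntervalIntegrable ρ volume 0 T)
    (h0 : ∀ t ∈ Icc 0 T, |d 0 + ∫ s in (0 : ℝ)..t, ρ s| ≤ δ) {t : ℝ} (ht : t ∈ Icc 0 T) :
    |d t| ≤ δ * Real.exp (|l| * T) := by
  have hT : 0 ≤ T := ht.1.trans ht.2
  have hint : IntervalIntegrable d volume 0 T := by
    have := hd.continuousOn
    rw [← uIcc_of_le hT] at this
    exact this.intervalIntegrable
  have hgronwall : |d t| ≤ δ * Real.exp (|l| * t) := by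
    refine le_mul_exp_of_le_add_mul_integral (abs_nonneg l) hd.continuousOn.abs (fun s hs => ?_) ht
    have hsub : uIcc 0 s ⊆ uIcc 0 T := by
      simpa only [uIcc_of_le hs.1, uIcc_of_le hT] using Icc_subset_Icc_right hs.2
    have heq := hd.eq_add s hs
    rw [intervalIntegral.integral_sub (hρ.mono_set hsub) ((hint.mono_set hsub).const_mul l),
      intervalIntegral.integral_const_mul, ← add_sub_assoc] at heq
    rw [heq]
    refine (abs_sub _ _).trans (add_le_add (h0 s hs) ?_)
    rw [abs_mul]
    exact mul_le_mul_of_nonneg_left (intervalIntegral.abs_integral_le_integral_abs hs.1)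
      (abs_nonneg l)
  refine hgronwall.trans ?_
  have hδ : 0 ≤ δ := (abs_nonneg _).trans (h0 t ht)
  gcongr
  exact ht.2

theorem uniformCauchySeqOn_of_isPrimitiveOn {c ρ : ℕ → ℝ → ℝ} {l T : ℝ}
    (hc : ∀ n, IsPrimitiveOn (c n) (fun t => ρ n t - l * c n t) 0 T)
    (hρ : ∀ n, IntervalIntegrable (ρ n) volume 0 T) (h0 : CauchySeq fun n => c n 0)
    (hG : UniformCauchySeqOn (fun n t => ∫ s in (0 : ℝ)..t, ρ n s) atTop (Icc 0 T)) :
    UniformCauchySeqOn c atTop (Icc 0 T) := by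
  rw [Metric.uniformCauchySeqOn_iff] at hG ⊢
  intro ε hε
  set δ := ε * (Real.exp (|l| * T))⁻¹ / 3 with hδ
  have hδ0 : 0 < δ := by positivity
  obtain ⟨N, hN⟩ := Metric.cauchySeq_iff.1 h0 δ hδ0
  obtain ⟨M, hM⟩ := hG δ hδ0
  refine ⟨max N M, fun m hm n hn t ht => ?_⟩
  have hT : 0 ≤ T := ht.1.trans ht.2
  have hd : IsPrimitiveOn (fun t => c m t - c n t)
      (fun t => (ρ m t - ρ n t) - l * (c m t - c n t)) 0 T := by
    convert (hc m).sub (hc n) using 2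
    ring
  have hle := hd.abs_le_mul_exp (δ := 2 * δ) ((hρ m).sub (hρ n)) (fun s hs => ?_) ht
  · rw [Real.dist_eq]
    refine hle.trans_lt ?_
    have : 2 * δ * Real.exp (|l| * T) = ε * (2 / 3) := by
      rw [hδ]
      field_simp
    linarith
  · have hsub : uIcc 0 s ⊆ uIcc 0 T := by
      simpa only [uIcc_of_le hs.1, uIcc_of_le hT] using Icc_subset_Icc_right hs.2
    rw [intervalIntegral.integral_sub ((hρ m).mono_set hsub) ((hρ n).mono_set hsub), two_mul]
    refine (abs_add_le _ _).trans (add_le_add ?_ ?_)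
    · exact (hN m (le_of_max_le_left hm) n (le_of_max_le_left hn)).le
    · exact (hM m (le_of_max_le_right hm) n (le_of_max_le_right hn) s hs).le

end UniformConvergence

section WeakForcing

theorem UniformlyLocallyBounded.exists_integral_norm_sub_sq_le {E : Type*}
    [NormedAddCommGroup E] {rn : ℕ → ℝ → E} (hb : UniformlyLocallyBounded rn) (T : ℝ) :
    ∃ C, ∀ m n, ∀ t ∈ Icc 0 T, ∫ s in (0 : ℝ)..t, ‖rn m s - rn n s‖ ^ 2 ≤ C := by
  obtain ⟨C, hC⟩ := hb T
  refine ⟨(C + C) ^ 2 * T, fun m n t ht => ?_⟩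
  refine (Real.le_norm_self _).trans ((intervalIntegral.norm_integral_le_of_norm_le_const_ae
    (C := (C + C) ^ 2) ?_).trans ?_)
  · filter_upwards [(ae_restrict_iff' measurableSet_Ioc).1 (hC m),
      (ae_restrict_iff' measurableSet_Ioc).1 (hC n)] with s hm hn hs
    rw [uIoc_of_le ht.1] at hs
    have hs' : s ∈ Ioc 0 T := ⟨hs.1, hs.2.trans ht.2⟩
    rw [norm_pow, norm_norm]
    exact pow_le_pow_left₀ (norm_nonneg _)
      ((norm_sub_le _ _).trans (add_le_add (hm hs') (hn hs'))) 2
  · rw [sub_zero, abs_of_nonneg ht.1]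
    exact mul_le_mul_of_nonneg_left ht.2 (sq_nonneg _)

variable {ι E : Type*} [NormedAddCommGroup E] [InnerProductSpace ℝ E] {rn : ℕ → ℝ → E} {r : ℝ → E}

theorem TendstoWeakly.tendsto_integral_inner (h : TendstoWeakly rn r) (v : E) {t : ℝ}
    (ht : 0 ≤ t) : Tendsto (fun n => ∫ s in (0 : ℝ)..t, ⟪v, rn n s⟫) atTop
      (𝓝 (∫ s in (0 : ℝ)..t, ⟪v, r s⟫)) := by
  simpa only [intervalIntegral.integral_of_le ht, real_inner_comm] using
    h t (fun _ => v) (memLp_const v)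

theorem TendstoWeakly.tendstoUniformlyOn_integral_inner (h : TendstoWeakly rn r)
    (hb : UniformlyLocallyBounded rn) (hrn : ∀ n, LocallyL2 (rn n)) (v : E) (T : ℝ) :
    TendstoUniformlyOn (fun n t => ∫ s in (0 : ℝ)..t, ⟪v, rn n s⟫)
      (fun t => ∫ s in (0 : ℝ)..t, ⟪v, r s⟫) atTop (Icc 0 T) := by
  obtain ⟨C, hC⟩ := hb T
  refine tendstoUniformlyOn_of_lipschitzOnWith (K := (‖v‖ * C).toNNReal) isCompact_Icc
    (fun n => LipschitzOnWith.of_dist_le_mul fun x hx y hy => ?_)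
    fun t ht => h.tendsto_integral_inner v ht.1
  have hint (z) (hz : z ∈ Icc 0 T) : IntervalIntegrable (fun s => ⟪v, rn n s⟫) volume 0 z :=
    ((hrn n).inner_left v).intervalIntegrable hz.1
  rw [Real.dist_eq, intervalIntegral.integral_interval_sub_left (hint x hx) (hint y hy),
    Real.dist_eq, ← Real.norm_eq_abs]
  refine intervalIntegral.norm_integral_le_of_norm_le_const_ae ?_
  filter_upwards [(ae_restrict_iff' measurableSet_Ioc).1 (hC n)] with s hs hsxy
  have hs0 : s ∈ Ioc 0 T := ⟨(le_min hy.1 hx.1).trans_lt hsxy.1, hsxy.2.trans (max_le hy.2 hx.2)⟩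
  exact (norm_inner_le_norm v _).trans
    ((mul_le_mul_of_nonneg_left (hs hs0) (norm_nonneg v)).trans (Real.le_coe_toNNReal _))

end WeakForcing

namespace IsMildSolution

variable {ι E : Type*} [NormedAddCommGroup E] [InnerProductSpace ℝ E] {e : HilbertBasis ι ℝ E}
  {l : ι → ℝ} {un rn : ℕ → ℝ → E} {r : ℝ → E}

theorem uniformCauchySeqOn_inner (h : ∀ n, IsMildSolution e l (un n) (rn n))
    (h0 : CauchySeq fun n => un n 0) (hb : UniformlyLocallyBounded rn)
    (hr : TendstoWeakly rn r) (k : ι) {T : ℝ} (hT : 0 ≤ T) :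
    UniformCauchySeqOn (fun n t => ⟪e k, un n t⟫) atTop (Icc 0 T) :=
  uniformCauchySeqOn_of_isPrimitiveOn (fun n => (h n).isPrimitiveOn k T hT)
    (fun n => ((h n).locallyL2.inner_left (e k)).intervalIntegrable hT)
    (h0.map (innerSL ℝ (e k)).uniformContinuous)
    (hr.tendstoUniformlyOn_integral_inner hb (fun n => (h n).locallyL2) (e k) T).uniformCauchySeqOn

theorem uniformCauchySeqOn (h : ∀ n, IsMildSolution e l (un n) (rn n))
    (hl : Tendsto l cofinite atTop) (h0 : CauchySeq fun n => un n 0)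
    (hb : UniformlyLocallyBounded rn) (hr : TendstoWeakly rn r) {T : ℝ} (hT : 0 ≤ T) :
    UniformCauchySeqOn un atTop (Icc 0 T) := by
  intro U hU
  obtain ⟨ε, hε, hεU⟩ := Metric.mem_uniformity_dist.1 hU
  obtain ⟨C, hC⟩ := hb.exists_integral_norm_sub_sq_le T
  obtain ⟨L, hL0, hL⟩ : ∃ L : ℝ, 0 < L ∧ L⁻¹ * C < ε ^ 2 / 3 := by
    have : Tendsto (fun L : ℝ => L⁻¹ * C) atTop (𝓝 0) := by
      simpa using tendsto_inv_atTop_zero.mul_const C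
    exact ((eventually_gt_atTop 0).and (this.eventually_lt_const (by positivity))).exists
  obtain ⟨F, hF⟩ : ∃ F : Finset ι, ∀ k ∉ F, L ≤ l k :=
    ⟨Set.Finite.toFinset (hl.eventually_ge_atTop L), fun k hk =>
      not_not.1 fun hkL => hk ((Finite.mem_toFinset _).2 hkL)⟩
  set δ := ε ^ 2 / (3 * (F.card + 1))
  have hδ : 0 < δ := by positivity
  have hinit : ∀ᶠ p : ℕ × ℕ in atTop ×ˢ atTop, dist (un p.1 0) (un p.2 0) < √(ε ^ 2 / 3) := by
    rw [prod_atTop_atTop_eq]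
    exact (cauchySeq_iff_tendsto.1 h0).eventually (Metric.dist_mem_uniformity (by positivity))
  have hlow : ∀ᶠ p : ℕ × ℕ in atTop ×ˢ atTop, ∀ k ∈ F, ∀ t ∈ Icc 0 T,
      dist ⟪e k, un p.1 t⟫ ⟪e k, un p.2 t⟫ < √δ :=
    (eventually_all_finset F).2 fun k _ => uniformCauchySeqOn_inner h h0 hb hr k hT _
      (Metric.dist_mem_uniformity (Real.sqrt_pos.2 hδ))
  filter_upwards [hinit, hlow] with p hp hpF t ht
  refine hεU (lt_of_pow_lt_pow_left₀ 2 hε.le ?_)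
  rw [Real.lt_sqrt dist_nonneg, dist_eq_norm] at hp
  have hsum : ∑ k ∈ F, ⟪e k, un p.1 t - un p.2 t⟫ ^ 2 ≤ ε ^ 2 / 3 := by
    refine (Finset.sum_le_card_nsmul F _ δ fun k hk => ?_).trans ?_
    · have hk := (Real.lt_sqrt dist_nonneg).1 (hpF k hk t ht)
      rw [Real.dist_eq, sq_abs, ← inner_sub_right] at hk
      exact hk.le
    · rw [nsmul_eq_mul, ← mul_div_assoc, div_le_div_iff₀ (by positivity) three_pos]
      nlinarith [sq_nonneg ε]
  have hforce := mul_le_mul_of_nonneg_left (hC p.1 p.2 t ht) (inv_pos.2 hL0).le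
  have henergy := ((h p.1).sub (h p.2)).norm_sq_le hL0 hF ht.1
  rw [dist_eq_norm]
  linarith

theorem of_tendstoUniformlyOn {u : ℝ → E} (h : ∀ n, IsMildSolution e l (un n) (rn n))
    (hrL2 : LocallyL2 r) (hr : TendstoWeakly rn r)
    (hu : ∀ T, 0 ≤ T → TendstoUniformlyOn un u atTop (Icc 0 T)) : IsMildSolution e l u r := by
  have hcont (T) (hT : 0 ≤ T) : ContinuousOn u (Icc 0 T) :=
    (hu T hT).continuousOn <| .of_forall fun n => (h n).continuousOn.mono Icc_subset_Ici_self
  refine ⟨fun t ht => ?_, hrL2, fun k T hT => ?_⟩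
  · exact (hcont (t + 1) (add_nonneg ht zero_le_one) t
      ⟨ht, (lt_add_one t).le⟩).mono_of_mem_nhdsWithin
      (inter_mem_nhdsWithin (Ici 0) (Iic_mem_nhds (lt_add_one t)))
  have hcoord (t) (ht : 0 ≤ t) : TendstoUniformlyOn (fun n t => ⟪e k, un n t⟫)
      (fun t => ⟪e k, u t⟫) atTop (uIcc 0 t) :=
    (innerSL ℝ (e k)).uniformContinuous.comp_tendstoUniformlyOn (uIcc_of_le ht ▸ hu t ht)
  have hun (n t) (ht : 0 ≤ t) : ContinuousOn (fun t => ⟪e k, un n t⟫) (uIcc 0 t) :=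
    continuousOn_const.inner ((h n).continuousOn.mono (uIcc_of_le ht ▸ Icc_subset_Ici_self))
  have hint {v : ℝ → E} (hv : LocallyL2 v) {t} (ht : 0 ≤ t) :
      IntervalIntegrable (fun t => ⟪e k, v t⟫) volume 0 t :=
    (hv.inner_left (e k)).intervalIntegrable ht
  have hu_int {t} (ht : 0 ≤ t) : IntervalIntegrable (fun t => ⟪e k, u t⟫) volume 0 t :=
    (continuousOn_const.inner (uIcc_of_le ht ▸ hcont t ht)).intervalIntegrable
  refine .of_tendsto (fun n => (h n).isPrimitiveOn k T hT) ((hint hrL2 hT).sub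
    ((hu_int hT).const_mul (l k))) (fun t ht => (hcoord T hT).tendsto_at (uIcc_of_le hT ▸ ht))
    hT fun t ht => ?_
  simp only [intervalIntegral.integral_sub (hint (h _).locallyL2 ht.1)
      ((hun _ t ht.1).intervalIntegrable.const_mul (l k)),
    intervalIntegral.integral_sub (hint hrL2 ht.1) ((hu_int ht.1).const_mul (l k)),
    intervalIntegral.integral_const_mul]
  exact (hr.tendsto_integral_inner (e k) ht.1).sub <|
    ((hcoord t ht.1).tendsto_intervalIntegral_of_continuousOn
      (.of_forall fun n => hun n t ht.1)).const_mul (l k)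

theorem exists_tendstoUniformlyOn [CompleteSpace E] (h : ∀ n, IsMildSolution e l (un n) (rn n))
    (hl : Tendsto l cofinite atTop) (h0 : CauchySeq fun n => un n 0)
    (hb : UniformlyLocallyBounded rn) (hrL2 : LocallyL2 r) (hr : TendstoWeakly rn r) :
    ∃ u, IsMildSolution e l u r ∧ ∀ T, 0 ≤ T → TendstoUniformlyOn un u atTop (Icc 0 T) := by
  have hcauchy (t : ℝ) (ht : 0 ≤ t) : ∃ y, Tendsto (fun n => un n t) atTop (𝓝 y) :=
    cauchySeq_tendsto_of_complete
      ((uniformCauchySeqOn h hl h0 hb hr ht).cauchySeq (right_mem_Icc.2 ht))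
  choose! u hu using hcauchy
  have hunif (T) (hT : 0 ≤ T) : TendstoUniformlyOn un u atTop (Icc 0 T) :=
    (uniformCauchySeqOn h hl h0 hb hr hT).tendstoUniformlyOn_of_tendsto fun t ht => hu t ht.1
  exact ⟨u, of_tendstoUniformlyOn h hrL2 hr hunif, hunif⟩

end IsMildSolution

section HeavisideSelections

variable {α : Type*} [MeasurableSpace α] {μ : Measure α}

theorem integral_mul_eq_inner (f g : Lp ℝ 2 μ) : ∫ x, f x * g x ∂μ = ⟪f, g⟫ := by
  simp only [L2.inner_def, RCLike.inner_apply, conj_trivial, mul_comm]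

theorem integrable_mul_of_Lp_two (f g : Lp ℝ 2 μ) : Integrable (fun x => f x * g x) μ := by
  simpa only [RCLike.inner_apply, conj_trivial, mul_comm] using L2.integrable_inner (𝕜 := ℝ) f g

theorem exists_mem_heaviside_mul_iff {a β s : ℝ} :
    (∃ h ∈ heaviside s, a = β * h) ↔ |a| ≤ |β| ∧ a * s = β * |s| := by
  unfold heaviside
  constructor
  · rintro ⟨h, hh, rfl⟩
    split_ifs at hh with hneg hzero
    · obtain rfl := mem_singleton_iff.1 hh
      simp [abs_of_neg hneg]
    · rw [abs_mul, hzero]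
      exact ⟨mul_le_of_le_one_right (abs_nonneg β) (abs_le.2 hh), by simp⟩
    · obtain rfl := mem_singleton_iff.1 hh
      simp [abs_of_nonneg (not_lt.1 hneg)]
  · rintro ⟨hle, heq⟩
    split_ifs with hneg hzero
    · refine ⟨-1, rfl, mul_right_cancel₀ hneg.ne ?_⟩
      rw [heq, abs_of_neg hneg]
      ring
    · refine ⟨a / β, abs_le.1 ?_, ?_⟩
      · rw [abs_div]
        exact div_le_one_of_le₀ hle (abs_nonneg β)
      · rcases eq_or_ne β 0 with rfl | hβ
        · simpa using hle
        · field_simp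
    · refine ⟨1, rfl, mul_right_cancel₀ hzero ?_⟩
      rw [heq, abs_of_nonneg (not_lt.1 hneg), mul_one]

variable [IsFiniteMeasure μ]

theorem integral_abs_eq_inner_const (u : Lp ℝ 2 μ) :
    ∫ x, |u x| ∂μ = ⟪Lp.const 2 μ (1 : ℝ), |u|⟫ := by
  rw [← integral_mul_eq_inner]
  refine integral_congr_ae ?_
  filter_upwards [Lp.coeFn_abs u, Lp.coeFn_const 2 μ (1 : ℝ)] with x habs hone
  rw [habs, hone, Function.const_apply, one_mul]

theorem continuous_integral_abs : Continuous fun u : Lp ℝ 2 μ => ∫ x, |u x| ∂μ := by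
  simp only [integral_abs_eq_inner_const]
  exact continuous_const.inner (continuous_id.sup continuous_neg)

theorem integral_abs_le_norm {ν : Measure α} [IsProbabilityMeasure ν] (u : Lp ℝ 2 ν) :
    ∫ x, |u x| ∂ν ≤ ‖u‖ := by
  rw [integral_abs_eq_inner_const]
  refine (real_inner_le_norm _ _).trans ?_
  rw [Lp.norm_const 2 ν _ two_ne_zero, norm_abs_eq_norm]
  simp

theorem ae_abs_le_iff_forall_inner_le {a : Lp ℝ 2 μ} {C : ℝ} :
    (∀ᵐ x ∂μ, |a x| ≤ C) ↔ ∀ g : Lp ℝ 2 μ, ⟪a, g⟫ ≤ C * ∫ x, |g x| ∂μ := by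
  constructor
  · intro h g
    rw [← integral_mul_eq_inner, ← integral_const_mul]
    refine integral_mono_ae (integrable_mul_of_Lp_two a g)
      ((Lp.memLp g).integrable one_le_two |>.abs.const_mul C) ?_
    filter_upwards [h] with x hx
    exact (le_abs_self _).trans
      ((abs_mul _ _).trans_le (mul_le_mul_of_nonneg_right hx (abs_nonneg _)))
  · intro h
    have ha : Integrable a μ := (Lp.memLp a).integrable one_le_two
    have hset (c : ℝ) (hc : |c| = 1) : ∀ᵐ x ∂μ, c * a x ≤ C := by
      refine ae_le_of_forall_setIntegral_le (ha.const_mul c) (integrable_const C) fun s hs hμs => ?_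
      have hs_le := h (indicatorConstLp 2 hs hμs.ne c)
      have habs : ∫ x, |indicatorConstLp 2 hs hμs.ne c x| ∂μ = μ.real s := by
        rw [integral_congr_ae (g := s.indicator 1), integral_indicator_one hs]
        filter_upwards [indicatorConstLp_coeFn (p := 2) (hs := hs) (hμs := hμs.ne) (c := c)]
          with x hx
        by_cases hxs : x ∈ s <;> simp [hx, hxs, hc]
      rw [real_inner_comm, L2.inner_indicatorConstLp_eq_setIntegral_inner ℝ, habs] at hs_le
      simpa [mul_comm] using hs_le
    filter_upwards [hset 1 (by simp), hset (-1) (by simp)] with x hpos hneg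
    exact abs_le'.2 ⟨by simpa using hpos, by simpa using hneg⟩

/-- Integrating the pointwise characterisation `|a| ≤ |β|`, `a u = β |u|` loses nothing, because the
bound gives `a u - β |u|` a constant sign. -/
theorem ae_exists_mem_heaviside_mul_iff {a u : Lp ℝ 2 μ} {β : ℝ} :
    (∀ᵐ x ∂μ, ∃ h ∈ heaviside (u x), a x = β * h) ↔
      (∀ g : Lp ℝ 2 μ, ⟪a, g⟫ ≤ |β| * ∫ x, |g x| ∂μ) ∧ ⟪a, u⟫ = β * ∫ x, |u x| ∂μ := by
  simp only [exists_mem_heaviside_mul_iff, eventually_and]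
  rw [← ae_abs_le_iff_forall_inner_le, ← integral_mul_eq_inner, ← integral_const_mul]
  refine and_congr_right fun habs => ⟨fun h => integral_congr_ae h, fun h => ?_⟩
  have hau := integrable_mul_of_Lp_two a u
  have hβu : Integrable (fun x => β * |u x|) μ :=
    ((Lp.memLp u).integrable one_le_two).abs.const_mul β
  rcases le_total 0 β with hβ | hβ
  · refine (integral_eq_iff_of_ae_le hau hβu ?_).1 h
    filter_upwards [habs] with x hx
    rw [abs_of_nonneg hβ] at hx
    exact (le_abs_self _).trans
      ((abs_mul _ _).trans_le (mul_le_mul_of_nonneg_right hx (abs_nonneg _)))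
  · refine ((integral_eq_iff_of_ae_le hβu hau ?_).1 h.symm).symm
    filter_upwards [habs] with x hx
    have := mul_le_mul_of_nonneg_right hx (abs_nonneg (u x))
    rw [← abs_mul, abs_of_nonpos hβ] at this
    linarith [neg_abs_le (a x * u x)]

theorem ae_exists_mem_heaviside_iff {r u : Lp ℝ 2 μ} {β w : ℝ} :
    (∀ᵐ x ∂μ, ∃ h ∈ heaviside (u x), r x = β * h + w * u x) ↔
      (∀ g : Lp ℝ 2 μ, ⟪r, g⟫ ≤ |β| * ∫ x, |g x| ∂μ + w * ⟪u, g⟫) ∧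
        ⟪r, u⟫ = β * ∫ x, |u x| ∂μ + w * ‖u‖ ^ 2 := by
  have hsub : (∀ᵐ x ∂μ, ∃ h ∈ heaviside (u x), r x = β * h + w * u x) ↔
      ∀ᵐ x ∂μ, ∃ h ∈ heaviside (u x), (r - w • u) x = β * h := by
    refine eventually_congr ?_
    filter_upwards [Lp.coeFn_sub r (w • u), Lp.coeFn_smul w u] with x hx hwx
    simp only [hx, hwx, Pi.sub_apply, Pi.smul_apply, smul_eq_mul, sub_eq_iff_eq_add]
  simp only [hsub, ae_exists_mem_heaviside_mul_iff, inner_sub_left, real_inner_smul_left,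
    real_inner_self_eq_norm_sq, sub_le_iff_le_add, sub_eq_iff_eq_add]

theorem norm_le_of_ae_exists_mem_heaviside {ν : Measure α} [IsProbabilityMeasure ν]
    {r u : Lp ℝ 2 ν} {β w : ℝ}
    (h : ∀ᵐ x ∂ν, ∃ h ∈ heaviside (u x), r x = β * h + w * u x) : ‖r‖ ≤ |β| + |w| * ‖u‖ := by
  have hr := (ae_exists_mem_heaviside_iff.1 h).1 r
  have habs := mul_le_mul_of_nonneg_left (integral_abs_le_norm r) (abs_nonneg β)
  have hwu : w * ⟪u, r⟫ ≤ |w| * (‖u‖ * ‖r‖) := (le_abs_self _).trans <| (abs_mul _ _).trans_le <|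
    mul_le_mul_of_nonneg_left (abs_real_inner_le_norm u r) (abs_nonneg w)
  rw [real_inner_self_eq_norm_sq] at hr
  rcases (norm_nonneg r).eq_or_lt with h0 | h0
  · rw [← h0]
    positivity
  · exact le_of_mul_le_mul_right (by linarith) h0

end HeavisideSelections

section WeakLimits

theorem memLp_Ioc_of_continuousOn {E : Type*} [NormedAddCommGroup E] {f : ℝ → E} {a b : ℝ}
    {p : ENNReal} (hf : ContinuousOn f (Icc a b)) : MemLp f p (volume.restrict (Ioc a b)) := by
  obtain ⟨K, hK⟩ := isCompact_Icc.exists_bound_of_continuousOn hf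
  refine .of_bound ((hf.mono Ioc_subset_Icc_self).aestronglyMeasurable measurableSet_Ioc) K ?_
  filter_upwards [ae_restrict_mem measurableSet_Ioc] with t ht
  exact hK t (Ioc_subset_Icc_self ht)

theorem tendstoUniformlyOn_comp_of_continuous {α X Y ι : Type*} [TopologicalSpace α]
    [UniformSpace X] [UniformSpace Y] {Φ : X → Y} (hΦ : Continuous Φ) {p : Filter ι}
    {F : ι → α → X} {f : α → X} {s : Set α} (hs : IsCompact s) (hf : ContinuousOn f s)
    (h : TendstoUniformlyOn F f p s) :
    TendstoUniformlyOn (fun i x => Φ (F i x)) (fun x => Φ (f x)) p s := by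
  intro U hU
  filter_upwards [h _ ((hs.image_of_continuousOn hf).uniformContinuousAt_of_continuousAt Φ
    (fun _ _ => hΦ.continuousAt) hU)] with i hi x hx
  exact hi x hx (mem_image_of_mem f hx)

variable {E : Type*} [NormedAddCommGroup E] [InnerProductSpace ℝ E] {rn gn : ℕ → ℝ → E}
  {r g : ℝ → E}

theorem TendstoWeakly.ae_inner_le (h : TendstoWeakly rn r) (hrn : ∀ n, LocallyL2 (rn n))
    (hr : LocallyL2 r) {T : ℝ} {γ : ℝ → ℝ} (hg : MemLp g 2 (volume.restrict (Ioc 0 T)))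
    (hγ : IntegrableOn γ (Ioc 0 T))
    (hle : ∀ᶠ n in atTop, ∀ᵐ t ∂volume.restrict (Ioc 0 T), ⟪rn n t, g t⟫ ≤ γ t) :
    ∀ᵐ t ∂volume.restrict (Ioc 0 T), ⟪r t, g t⟫ ≤ γ t := by
  have hset {v : ℝ → E} {s : Set ℝ} (hs : MeasurableSet s) :
      ∫ t in Ioc 0 T, ⟪v t, s.indicator g t⟫ =
        ∫ t in s, ⟪v t, g t⟫ ∂volume.restrict (Ioc 0 T) := by
    rw [← integral_indicator hs]
    congr 1 with t
    by_cases ht : t ∈ s <;> simp [ht]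
  refine ae_le_of_forall_setIntegral_le (integrable_inner_of_memLp (hr T) hg) hγ fun s hs _ => ?_
  have hlim := h T (s.indicator g) (hg.indicator hs)
  simp only [hset hs] at hlim
  refine le_of_tendsto hlim ?_
  filter_upwards [hle] with n hn
  exact integral_mono_ae (integrable_inner_of_memLp (hrn n T) hg).integrableOn hγ.integrableOn
    (ae_restrict_of_ae hn)

theorem TendstoWeakly.ae_inner_le_of_tendstoUniformlyOn (h : TendstoWeakly rn r)
    (hb : UniformlyLocallyBounded rn) (hrn : ∀ n, LocallyL2 (rn n)) (hr : LocallyL2 r)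
    {βn : ℕ → ℝ → ℝ} {β : ℝ → ℝ} (hg : ContinuousOn g (Ici 0)) (hβ : ContinuousOn β (Ici 0))
    (hgn : ∀ T, 0 ≤ T → TendstoUniformlyOn gn g atTop (Icc 0 T))
    (hβn : ∀ T, 0 ≤ T → TendstoUniformlyOn βn β atTop (Icc 0 T))
    (hle : ∀ n, ∀ᵐ t ∂volume.restrict (Ioi 0), ⟪rn n t, gn n t⟫ ≤ βn n t) :
    ∀ᵐ t ∂volume.restrict (Ioi 0), ⟪r t, g t⟫ ≤ β t := by
  refine ae_restrict_Ioi_zero_iff.2 fun N => ?_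
  obtain ⟨C, hC⟩ := hb N
  have hβint : IntegrableOn β (Ioc 0 (N : ℝ)) :=
    ((hβ.mono Icc_subset_Ici_self).integrableOn_compact isCompact_Icc).mono_set Ioc_subset_Icc_self
  have hgL2 : MemLp g 2 (volume.restrict (Ioc 0 (N : ℝ))) :=
    memLp_Ioc_of_continuousOn (hg.mono Icc_subset_Ici_self)
  have happrox (k : ℕ) : ∀ᵐ t ∂volume.restrict (Ioc 0 (N : ℝ)), ⟪r t, g t⟫ ≤ β t + 1 / (k + 1) := by
    refine h.ae_inner_le hrn hr hgL2 (hβint.add (integrable_const _)) ?_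
    set δ : ℝ := 1 / (k + 1) / (|C| + 1)
    have hδ : 0 < δ := by positivity
    filter_upwards [Metric.tendstoUniformlyOn_iff.1 (hgn N N.cast_nonneg) δ hδ,
      Metric.tendstoUniformlyOn_iff.1 (hβn N N.cast_nonneg) δ hδ] with n hgδ hβδ
    filter_upwards [hC n, ae_restrict_Ioi_zero_iff.1 (hle n) N, ae_restrict_mem measurableSet_Ioc]
      with t hCt hlet ht
    have ht' := Ioc_subset_Icc_self ht
    have hinner : ⟪rn n t, g t - gn n t⟫ ≤ |C| * δ := (real_inner_le_norm _ _).trans <|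
      mul_le_mul (hCt.trans (le_abs_self C)) (by simpa [dist_eq_norm] using (hgδ t ht').le)
        (norm_nonneg _) (abs_nonneg C)
    have hβle := (abs_lt.1 (hβδ t ht')).1
    have hsum : |C| * δ + δ = 1 / (k + 1) := by
      rw [← add_one_mul, mul_div_cancel₀ _ (by positivity)]
    rw [inner_sub_right] at hinner
    linarith
  filter_upwards [ae_all_iff.2 happrox] with t ht
  refine ge_of_tendsto' (x := atTop) ?_ ht
  simpa using tendsto_one_div_add_atTop_nhds_zero_nat.const_add (β t)

theorem TendstoWeakly.ae_inner_comp_le {X : Type*} [UniformSpace X] (h : TendstoWeakly rn r)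
    (hb : UniformlyLocallyBounded rn) (hrn : ∀ n, LocallyL2 (rn n)) (hr : LocallyL2 r)
    {vn : ℕ → ℝ → X} {v : ℝ → X} (hv : ContinuousOn v (Ici 0))
    (hvn : ∀ T, 0 ≤ T → TendstoUniformlyOn vn v atTop (Icc 0 T)) {Φ : X → E} {Ψ : X → ℝ}
    (hΦ : Continuous Φ) (hΨ : Continuous Ψ)
    (hle : ∀ n, ∀ᵐ t ∂volume.restrict (Ioi 0), ⟪rn n t, Φ (vn n t)⟫ ≤ Ψ (vn n t)) :
    ∀ᵐ t ∂volume.restrict (Ioi 0), ⟪r t, Φ (v t)⟫ ≤ Ψ (v t) :=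
  h.ae_inner_le_of_tendstoUniformlyOn hb hrn hr (hΦ.comp_continuousOn hv) (hΨ.comp_continuousOn hv)
    (fun T hT => tendstoUniformlyOn_comp_of_continuous hΦ isCompact_Icc
      (hv.mono Icc_subset_Ici_self) (hvn T hT))
    (fun T hT => tendstoUniformlyOn_comp_of_continuous hΨ isCompact_Icc
      (hv.mono Icc_subset_Ici_self) (hvn T hT)) hle

end WeakLimits

section HeavisideLimits

variable {α : Type*} [MeasurableSpace α] {μ : Measure α} [IsFiniteMeasure μ]
  [TopologicalSpace.SeparableSpace (Lp ℝ 2 μ)]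

/-- The condition in `ae_exists_mem_heaviside_iff` is affine in `r` and continuous in the remaining
data, so it survives weak limits of `r`. -/
theorem TendstoWeakly.ae_exists_mem_heaviside {un rn : ℕ → ℝ → Lp ℝ 2 μ} {u r : ℝ → Lp ℝ 2 μ}
    (h : TendstoWeakly rn r) (hb : UniformlyLocallyBounded rn) (hrn : ∀ n, LocallyL2 (rn n))
    (hr : LocallyL2 r) {σn : ℕ → ℝ → ℝ × ℝ} {σ : ℝ → ℝ × ℝ}
    (hu : ContinuousOn u (Ici 0)) (hσ : ContinuousOn σ (Ici 0))
    (hun : ∀ T, 0 ≤ T → TendstoUniformlyOn un u atTop (Icc 0 T))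
    (hσn : ∀ T, 0 ≤ T → TendstoUniformlyOn σn σ atTop (Icc 0 T))
    (hsel : ∀ n, ∀ᵐ t ∂volume.restrict (Ioi 0), ∀ᵐ x ∂μ,
      ∃ h ∈ heaviside (un n t x), rn n t x = (σn n t).1 * h + (σn n t).2 * un n t x) :
    ∀ᵐ t ∂volume.restrict (Ioi 0), ∀ᵐ x ∂μ,
      ∃ h ∈ heaviside (u t x), r t x = (σ t).1 * h + (σ t).2 * u t x := by
  simp only [ae_exists_mem_heaviside_iff] at hsel ⊢
  have hunif (T) (hT : 0 ≤ T) :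
      TendstoUniformlyOn (fun n t => (σn n t, un n t)) (fun t => (σ t, u t)) atTop (Icc 0 T) :=
    fun U hU => ((hσn T hT).prodMk (hun T hT) U hU).diag_of_prod
  have hlim {Φ : (ℝ × ℝ) × Lp ℝ 2 μ → Lp ℝ 2 μ} {Ψ : (ℝ × ℝ) × Lp ℝ 2 μ → ℝ} (hΦ : Continuous Φ)
      (hΨ : Continuous Ψ) (hle : ∀ n, ∀ᵐ t ∂volume.restrict (Ioi 0),
        ⟪rn n t, Φ (σn n t, un n t)⟫ ≤ Ψ (σn n t, un n t)) :=
    h.ae_inner_comp_le hb hrn hr (hσ.prodMk hu) hunif hΦ hΨ hle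
  have habs : Continuous fun p : (ℝ × ℝ) × Lp ℝ 2 μ => ∫ x, |p.2 x| ∂μ :=
    continuous_integral_abs.comp continuous_snd
  have hpair : Continuous fun p : (ℝ × ℝ) × Lp ℝ 2 μ =>
      p.1.1 * ∫ x, |p.2 x| ∂μ + p.1.2 * ‖p.2‖ ^ 2 := by fun_prop
  have hdense : ∀ᵐ t ∂volume.restrict (Ioi 0), ∀ k, let g := TopologicalSpace.denseSeq (Lp ℝ 2 μ) k;
      ⟪r t, g⟫ ≤ |(σ t).1| * ∫ x, |g x| ∂μ + (σ t).2 * ⟪u t, g⟫ := by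
    refine ae_all_iff.2 fun k => hlim (Φ := fun _ => _)
      (Ψ := fun p => |p.1.1| * _ + p.1.2 * ⟪p.2, _⟫) continuous_const (by fun_prop)
      fun n => (hsel n).mono fun t ht => ht.1 _
  have hge := hlim (Φ := fun p => p.2) (Ψ := fun p => p.1.1 * ∫ x, |p.2 x| ∂μ + p.1.2 * ‖p.2‖ ^ 2)
    continuous_snd hpair fun n => (hsel n).mono fun t ht => ht.2.le
  have hle := hlim (Φ := fun p => -p.2)
    (Ψ := fun p => -(p.1.1 * ∫ x, |p.2 x| ∂μ + p.1.2 * ‖p.2‖ ^ 2)) continuous_snd.neg hpair.neg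
    fun n => (hsel n).mono fun t ht => by rw [inner_neg_right, ht.2]
  filter_upwards [hdense, hge, hle] with t ht hle hge
  rw [inner_neg_right, neg_le_neg_iff] at hge
  refine ⟨fun g => ?_, hle.antisymm hge⟩
  have hclosed : IsClosed {g : Lp ℝ 2 μ | ⟪r t, g⟫ ≤
      |(σ t).1| * ∫ x, |g x| ∂μ + (σ t).2 * ⟪u t, g⟫} := isClosed_le (by fun_prop)
    ((continuous_integral_abs.const_mul _).add (by fun_prop))
  exact (TopologicalSpace.denseRange_denseSeq _).induction_on g hclosed ht

end HeavisideLimits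

section DirichletLaplacian

instance : IsProbabilityMeasure μ01 := ⟨by simp [μ01]⟩

theorem restrict_Ioc_zero_one_eq_μ01 : volume.restrict (Ioc (0 : ℝ) 1) = μ01 :=
  restrict_Ioo_eq_restrict_Ioc.symm

theorem memLp_μ01_of_continuousOn {f : ℝ → ℝ} {p : ENNReal} (hf : ContinuousOn f (Icc 0 1)) :
    MemLp f p μ01 := by
  simpa only [restrict_Ioc_zero_one_eq_μ01] using memLp_Ioc_of_continuousOn (p := p) hf

theorem integral_μ01 (f : ℝ → ℝ) : ∫ x, f x ∂μ01 = ∫ x in (0 : ℝ)..1, f x := by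
  rw [intervalIntegral.integral_of_le zero_le_one, restrict_Ioc_zero_one_eq_μ01]

theorem intervalIntegrable_iff_integrable_μ01 {f : ℝ → ℝ} :
    IntervalIntegrable f volume 0 1 ↔ Integrable f μ01 :=
  intervalIntegrable_iff_integrableOn_Ioo_of_le zero_le_one

theorem ae_mem_Ioo_μ01 : ∀ᵐ x ∂μ01, x ∈ Ioo (0 : ℝ) 1 := ae_restrict_mem measurableSet_Ioo

theorem intervalIntegrable_coeFn (w : Hsp) : IntervalIntegrable w volume 0 1 :=
  intervalIntegrable_iff_integrable_μ01.2 ((Lp.memLp w).integrable one_le_two)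

theorem inDomainA_iff_exists_isPrimitiveOn {v w : Hsp} :
    InDomainA v w ↔ ∃ F G : ℝ → ℝ, F =ᵐ[μ01] v ∧ F 0 = 0 ∧ F 1 = 0 ∧
      IsPrimitiveOn F G 0 1 ∧ IsPrimitiveOn G w 0 1 := by
  have hw := intervalIntegrable_coeFn w
  have hw' {x : ℝ} (hx : x ∈ Ioo (0 : ℝ) 1) : IntervalIntegrable w volume 0 x :=
    ((IsPrimitiveOn.const_add_integral hw 0).mono_right (Ioo_subset_Icc_self hx)).intervalIntegrable
  constructor
  · rintro ⟨F, hF, hF0, hF1, hFv, g, hFg, hgw⟩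
    have hhalf : (1 / 2 : ℝ) ∈ Ioo (0 : ℝ) 1 := by norm_num
    have hG := IsPrimitiveOn.const_add_integral hw (g (1 / 2) - ∫ z in (0 : ℝ)..(1 / 2), w z)
    refine ⟨F, _, hFv, hF0, hF1, .of_hasDerivAt_Ioo hF (fun x hx => ?_)
      (hG.continuousOn.intervalIntegrable_of_Icc zero_le_one), hG⟩
    refine (hFg x hx).congr_deriv ?_
    have hgx := hgw x hx _ hhalf
    rw [← intervalIntegral.integral_interval_sub_left (hw' hx) (hw' hhalf)] at hgx
    linarith
  · rintro ⟨F, G, hFv, hF0, hF1, hF, hG⟩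
    refine ⟨F, hF.continuousOn, hF0, hF1, hFv, G, fun x hx => hF.hasDerivAt hG.continuousOn hx,
      fun x hx y hy => ?_⟩
    rw [← intervalIntegral.integral_interval_sub_left (hw' hx) (hw' hy),
      hG.eq_add x (Ioo_subset_Icc_self hx), hG.eq_add y (Ioo_subset_Icc_self hy),
      add_sub_add_left_eq_sub]

theorem exists_inDomainA (w : Hsp) : ∃ v, InDomainA v w := by
  have hw := intervalIntegrable_coeFn w
  have hW : IntervalIntegrable (fun x => ∫ z in (0 : ℝ)..x, w z) volume 0 1 := by
    simpa only [zero_add] using (IsPrimitiveOn.const_add_integral hw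
      0).continuousOn.intervalIntegrable_of_Icc (μ := volume) zero_le_one
  have hG := IsPrimitiveOn.const_add_integral hw
    (-∫ x in (0 : ℝ)..1, ∫ z in (0 : ℝ)..x, w z)
  have hF := IsPrimitiveOn.const_add_integral
    (hG.continuousOn.intervalIntegrable_of_Icc zero_le_one) 0
  have hFm := memLp_μ01_of_continuousOn (p := 2) hF.continuousOn
  refine ⟨hFm.toLp, inDomainA_iff_exists_isPrimitiveOn.2
    ⟨_, _, hFm.coeFn_toLp.symm, ?_, ?_, hF, hG⟩⟩
  · simp only [intervalIntegral.integral_same, add_zero]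
  · rw [intervalIntegral.integral_add intervalIntegrable_const hW]
    simp

theorem InDomainA.inner_eq_inner {v w v' w' : Hsp} (h : InDomainA v w) (h' : InDomainA v' w') :
    ⟪v', w⟫ = ⟪w', v⟫ := by
  obtain ⟨F, G, hFv, hF0, hF1, hF, hG⟩ := inDomainA_iff_exists_isPrimitiveOn.1 h
  obtain ⟨F', G', hFv', hF0', hF1', hF', hG'⟩ := inDomainA_iff_exists_isPrimitiveOn.1 h'
  have hparts := (hF'.mul hG zero_le_one).sub (hF.mul hG' zero_le_one)
  have hzero := hparts.integral_eq_sub zero_le_one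
  simp only [hF0, hF1, hF0', hF1', zero_mul, sub_zero] at hzero
  rw [← sub_eq_zero, real_inner_comm, real_inner_comm v, L2.inner_def, L2.inner_def,
    ← integral_sub (L2.integrable_inner _ _) (L2.integrable_inner _ _), ← hzero, ← integral_μ01]
  refine integral_congr_ae ?_
  filter_upwards [hFv, hFv'] with x hx hx'
  rw [← hx, ← hx']
  simp only [RCLike.inner_apply, Real.ringHom_apply]
  ring

end DirichletLaplacian

section SineCompleteness

variable {f : ℝ → ℝ}

theorem integrable_mul_continuousOn_μ01 (hf : Integrable f μ01) {φ : ℝ → ℝ}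
    (hφ : ContinuousOn φ (Icc 0 1)) : Integrable (fun x => f x * φ x) μ01 := by
  rw [← intervalIntegrable_iff_integrable_μ01] at hf ⊢
  exact hf.mul_continuousOn (by rwa [uIcc_of_le zero_le_one])

theorem integral_mul_sin_mul_cos_pow_eq_zero (hf : Integrable f μ01)
    (h : ∀ k : ℕ, ∫ x, f x * Real.sin (k * (Real.pi * x)) ∂μ01 = 0) (m k : ℕ) :
    ∫ x, f x * (Real.sin (k * (Real.pi * x)) * Real.cos (Real.pi * x) ^ m) ∂μ01 = 0 := by
  induction m generalizing k with
  | zero => simpa only [pow_zero, mul_one] using h k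
  | succ m ih =>
    rcases k with _ | k
    · simp only [Nat.cast_zero, zero_mul, Real.sin_zero, mul_zero, integral_zero]
    · have product_to_sum (θ c : ℝ) : Real.sin ((k + 1 : ℕ) * θ) * (c * Real.cos θ) =
          2⁻¹ * (Real.sin (k * θ) * c + Real.sin ((k + 2 : ℕ) * θ) * c) := by
        have hadd := Real.sin_add ((k + 1 : ℕ) * θ) θ
        have hsub := Real.sin_sub ((k + 1 : ℕ) * θ) θ
        rw [show ((k + 1 : ℕ) : ℝ) * θ + θ = (k + 2 : ℕ) * θ by push_cast; ring] at hadd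
        rw [show ((k + 1 : ℕ) : ℝ) * θ - θ = k * θ by push_cast; ring] at hsub
        rw [hadd, hsub]
        ring
      simp only [pow_succ, product_to_sum, mul_left_comm (f _) 2⁻¹, mul_add (f _)]
      rw [integral_const_mul, integral_add, ih k, ih (k + 2), add_zero, mul_zero] <;>
        exact integrable_mul_continuousOn_μ01 hf (by fun_prop)

theorem integral_mul_sin_mul_polynomial_cos_eq_zero (hf : Integrable f μ01)
    (h : ∀ k : ℕ, ∫ x, f x * Real.sin (k * (Real.pi * x)) ∂μ01 = 0) (p : Polynomial ℝ) :
    ∫ x, f x * (Real.sin (Real.pi * x) * p.eval (Real.cos (Real.pi * x))) ∂μ01 = 0 := by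
  induction p using Polynomial.induction_on' with
  | add p q hp hq =>
    simp only [Polynomial.eval_add, mul_add]
    rw [integral_add, hp, hq, add_zero] <;>
      exact integrable_mul_continuousOn_μ01 hf (by fun_prop)
  | monomial n a =>
    have hpow := integral_mul_sin_mul_cos_pow_eq_zero hf h n 1
    simp only [Nat.cast_one, one_mul] at hpow
    simp only [Polynomial.eval_monomial, mul_left_comm _ a]
    rw [integral_const_mul, hpow, mul_zero]

theorem integral_mul_sin_mul_continuous_eq_zero (hf : Integrable f μ01)
    (h : ∀ k : ℕ, ∫ x, f x * Real.sin (k * (Real.pi * x)) ∂μ01 = 0) {ψ : ℝ → ℝ}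
    (hψ : Continuous ψ) : ∫ x, f x * (Real.sin (Real.pi * x) * ψ x) ∂μ01 = 0 := by
  have hle (ε : ℝ) (hε : 0 < ε) :
      ‖∫ x, f x * (Real.sin (Real.pi * x) * ψ x) ∂μ01‖ ≤ (∫ x, |f x| ∂μ01) * ε := by
    obtain ⟨p, hp⟩ := exists_polynomial_near_of_continuousOn (-1) 1
      (fun y => ψ (Real.arccos y / Real.pi))
      (hψ.comp (Real.continuous_arccos.div_const _)).continuousOn ε hε
    rw [← sub_zero (∫ x, f x * (Real.sin (Real.pi * x) * ψ x) ∂μ01),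
      ← integral_mul_sin_mul_polynomial_cos_eq_zero hf h p, ← integral_sub
        (integrable_mul_continuousOn_μ01 hf (by fun_prop))
        (integrable_mul_continuousOn_μ01 hf (by fun_prop)), ← integral_mul_const]
    refine norm_integral_le_of_norm_le (hf.abs.mul_const ε) ?_
    filter_upwards [ae_mem_Ioo_μ01] with x hx
    have hpx := hp (Real.cos (Real.pi * x)) ⟨Real.neg_one_le_cos _, Real.cos_le_one _⟩
    rw [Real.arccos_cos (mul_nonneg Real.pi_pos.le hx.1.le)
      (mul_le_of_le_one_right Real.pi_pos.le hx.2.le),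
      mul_div_cancel_left₀ _ Real.pi_ne_zero, abs_sub_comm] at hpx
    rw [← mul_sub, ← mul_sub, Real.norm_eq_abs, abs_mul, abs_mul]
    gcongr
    exact (mul_le_of_le_one_left (abs_nonneg _) (Real.abs_sin_le_one _)).trans hpx.le
  have hlim : Tendsto (fun ε => (∫ x, |f x| ∂μ01) * ε) (𝓝[>] 0) (𝓝 0) := by
    simpa only [mul_zero] using
      ((continuous_const_mul (∫ x, |f x| ∂μ01)).tendsto (0 : ℝ)).mono_left nhdsWithin_le_nhds
  exact norm_le_zero_iff.1 (ge_of_tendsto hlim (eventually_mem_nhdsWithin.mono hle))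

theorem ae_eq_zero_of_forall_integral_mul_sin_eq_zero (hf : Integrable f μ01)
    (h : ∀ k : ℕ, ∫ x, f x * Real.sin (k * (Real.pi * x)) ∂μ01 = 0) : f =ᵐ[μ01] 0 := by
  have hsin : Integrable (fun x => f x * Real.sin (Real.pi * x)) μ01 :=
    integrable_mul_continuousOn_μ01 hf (by fun_prop)
  have hzero := isOpen_Ioo.ae_eq_zero_of_integral_contDiff_smul_eq_zero
    (IntegrableOn.locallyIntegrableOn hsin) fun g hg _ hsupp => by
      rw [← integral_mul_sin_mul_continuous_eq_zero hf h hg.continuous, μ01,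
        setIntegral_eq_integral_of_forall_compl_eq_zero]
      · simp only [smul_eq_mul, mul_comm (g _), mul_assoc]
      · intro x hx
        simp only [image_eq_zero_of_notMem_tsupport fun hgx => hx (hsupp hgx), mul_zero]
  filter_upwards [(ae_restrict_iff' measurableSet_Ioo).2 hzero, ae_mem_Ioo_μ01] with x hx hxm
  exact (mul_eq_zero.1 hx).resolve_right (Real.sin_pos_of_pos_of_lt_pi
    (mul_pos Real.pi_pos hxm.1) (mul_lt_of_lt_one_right Real.pi_pos hxm.2)).ne'

end SineCompleteness

section DirichletEigenbasis

/-- The square root `(k + 1)π` of the `k`-th Dirichlet eigenvalue of `-∂²/∂x²` on `(0,1)`; the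
shift makes `ℕ` the index set. -/
def dirichletFrequency (k : ℕ) : ℝ := (k + 1) * Real.pi

/-- The `k`-th eigenvalue of `-∂²/∂x²` on `(0,1)` with Dirichlet boundary conditions, counted from
`k = 0`. -/
def dirichletEigenvalue (k : ℕ) : ℝ := dirichletFrequency k ^ 2

theorem pi_le_dirichletFrequency (k : ℕ) : Real.pi ≤ dirichletFrequency k :=
  le_mul_of_one_le_left Real.pi_pos.le (le_add_of_nonneg_left k.cast_nonneg)

theorem dirichletFrequency_pos (k : ℕ) : 0 < dirichletFrequency k :=
  Real.pi_pos.trans_le (pi_le_dirichletFrequency k)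

theorem sin_dirichletFrequency (k : ℕ) : Real.sin (dirichletFrequency k) = 0 := by
  simpa only [dirichletFrequency, Nat.cast_succ] using Real.sin_nat_mul_pi (k + 1)

theorem pi_sq_le_dirichletEigenvalue (k : ℕ) : Real.pi ^ 2 ≤ dirichletEigenvalue k :=
  pow_le_pow_left₀ Real.pi_pos.le (pi_le_dirichletFrequency k) 2

theorem dirichletEigenvalue_pos (k : ℕ) : 0 < dirichletEigenvalue k :=
  pow_pos (dirichletFrequency_pos k) 2

theorem strictMono_dirichletEigenvalue : StrictMono dirichletEigenvalue := fun i j hij =>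
  pow_lt_pow_left₀ (mul_lt_mul_of_pos_right (by gcongr) Real.pi_pos)
    (dirichletFrequency_pos i).le two_ne_zero

theorem tendsto_dirichletEigenvalue : Tendsto dirichletEigenvalue cofinite atTop := by
  rw [Nat.cofinite_eq_atTop]
  exact (tendsto_pow_atTop two_ne_zero).comp ((tendsto_atTop_add_const_right _ 1
    tendsto_natCast_atTop_atTop).atTop_mul_const Real.pi_pos)

/-- The `L²(0,1)`-normalized Dirichlet eigenfunction `√2 sin((k + 1)πx)`. -/
def dirichletEigenfunction (k : ℕ) : Hsp :=
  (memLp_μ01_of_continuousOn (f := fun x => √2 * Real.sin (dirichletFrequency k * x))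
    (by fun_prop)).toLp

theorem coeFn_dirichletEigenfunction (k : ℕ) :
    dirichletEigenfunction k =ᵐ[μ01] fun x => √2 * Real.sin (dirichletFrequency k * x) :=
  MemLp.coeFn_toLp _

theorem inner_dirichletEigenfunction (k : ℕ) (v : Hsp) :
    ⟪dirichletEigenfunction k, v⟫ =
      √2 * ∫ x, v x * Real.sin (dirichletFrequency k * x) ∂μ01 := by
  rw [L2.inner_def, ← integral_const_mul]
  refine integral_congr_ae ?_
  filter_upwards [coeFn_dirichletEigenfunction k] with x hx
  simp only [hx, RCLike.inner_apply, Real.ringHom_apply]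
  ring

theorem inDomainA_dirichletEigenfunction (k : ℕ) :
    InDomainA (dirichletEigenfunction k) (-dirichletEigenvalue k • dirichletEigenfunction k) := by
  set κ := dirichletFrequency k
  have hcoe : (fun x => √2 * (κ * -(κ * Real.sin (κ * x)))) =ᵐ[volume.restrict (Ioc 0 1)]
      (-dirichletEigenvalue k • dirichletEigenfunction k : Hsp) := by
    rw [restrict_Ioc_zero_one_eq_μ01]
    filter_upwards [Lp.coeFn_smul (-dirichletEigenvalue k) (dirichletEigenfunction k),
      coeFn_dirichletEigenfunction k] with x hx hx'
    rw [hx, Pi.smul_apply, hx', smul_eq_mul, dirichletEigenvalue]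
    ring
  refine inDomainA_iff_exists_isPrimitiveOn.2 ⟨fun x => √2 * Real.sin (κ * x),
    fun x => √2 * (κ * Real.cos (κ * x)), (coeFn_dirichletEigenfunction k).symm, ?_, ?_,
    .of_hasDerivAt (fun x => ?_) (by fun_prop),
    (IsPrimitiveOn.of_hasDerivAt (fun x => ?_) (by fun_prop)).congr_ae zero_le_one hcoe⟩
  · simp only [mul_zero, Real.sin_zero]
  · simp only [κ, mul_one, sin_dirichletFrequency, mul_zero]
  · exact (((hasDerivAt_id' x).const_mul κ).sin.const_mul √2).congr_deriv (by ring)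
  · exact ((((hasDerivAt_id' x).const_mul κ).cos.const_mul κ).const_mul √2).congr_deriv (by ring)

theorem InDomainA.inner_dirichletEigenfunction {v w : Hsp} (h : InDomainA v w) (k : ℕ) :
    ⟪dirichletEigenfunction k, w⟫ = -dirichletEigenvalue k * ⟪dirichletEigenfunction k, v⟫ := by
  rw [h.inner_eq_inner (inDomainA_dirichletEigenfunction k), real_inner_smul_left]

theorem norm_dirichletEigenfunction (k : ℕ) : ‖dirichletEigenfunction k‖ = 1 := by
  have hintegral : ∫ x, dirichletEigenfunction k x * Real.sin (dirichletFrequency k * x) ∂μ01 =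
      √2 * ∫ x in (0 : ℝ)..1, Real.sin (dirichletFrequency k * x) ^ 2 := by
    rw [← integral_μ01, ← integral_const_mul]
    refine integral_congr_ae ?_
    filter_upwards [coeFn_dirichletEigenfunction k] with x hx
    rw [hx]
    ring
  have hκ := (dirichletFrequency_pos k).ne'
  rw [← sq_eq_sq₀ (norm_nonneg _) zero_le_one, ← real_inner_self_eq_norm_sq,
    inner_dirichletEigenfunction, hintegral,
    intervalIntegral.integral_comp_mul_left (fun x => Real.sin x ^ 2) hκ, integral_sin_sq,
    ← mul_assoc, Real.mul_self_sqrt zero_le_two]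
  simp only [mul_zero, mul_one, Real.sin_zero, sin_dirichletFrequency, zero_mul, smul_eq_mul]
  field_simp
  ring

theorem orthonormal_dirichletEigenfunction : Orthonormal ℝ dirichletEigenfunction := by
  refine ⟨norm_dirichletEigenfunction, fun i j hij => ?_⟩
  have hsymm := (inDomainA_dirichletEigenfunction j).inner_dirichletEigenfunction i
  rw [inner_smul_right] at hsymm
  exact (mul_eq_mul_right_iff.1 hsymm).resolve_left fun h =>
    strictMono_dirichletEigenvalue.injective.ne hij (neg_injective h).symm

theorem eq_zero_of_forall_inner_dirichletEigenfunction {f : Hsp}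
    (hf : ∀ k, ⟪dirichletEigenfunction k, f⟫ = 0) : f = 0 := by
  rw [Lp.eq_zero_iff_ae_eq_zero]
  refine ae_eq_zero_of_forall_integral_mul_sin_eq_zero
    ((Lp.memLp f).integrable one_le_two) fun k => ?_
  rcases k with _ | k
  · simp only [Nat.cast_zero, zero_mul, Real.sin_zero, mul_zero, integral_zero]
  · have hk := hf k
    rw [inner_dirichletEigenfunction] at hk
    simpa only [dirichletFrequency, mul_assoc, Nat.cast_succ] using
      (mul_eq_zero.1 hk).resolve_left (by positivity)

/-- The orthonormal basis of `L²(0,1)` in which the Dirichlet Laplacian is diagonal. -/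
def dirichletEigenbasis : HilbertBasis ℕ ℝ Hsp :=
  .mkOfOrthogonalEqBot orthonormal_dirichletEigenfunction <| (Submodule.eq_bot_iff _).2 fun _ hf =>
    eq_zero_of_forall_inner_dirichletEigenfunction fun k =>
      (Submodule.mem_orthogonal _ _).1 hf _ (Submodule.subset_span ⟨k, rfl⟩)

theorem dirichletEigenbasis_apply (k : ℕ) : dirichletEigenbasis k = dirichletEigenfunction k := by
  simp [dirichletEigenbasis]

theorem inDomainA_iff_forall_inner {v w : Hsp} : InDomainA v w ↔
    ∀ k, ⟪dirichletEigenbasis k, w⟫ = -dirichletEigenvalue k * ⟪dirichletEigenbasis k, v⟫ := by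
  simp only [dirichletEigenbasis_apply]
  refine ⟨fun h => h.inner_dirichletEigenfunction, fun h => ?_⟩
  obtain ⟨v', hv'⟩ := exists_inDomainA w
  have hvv' : v = v' := eq_of_forall_inner_eq dirichletEigenbasis fun k => by
    have hk := h k
    rw [hv'.inner_dirichletEigenfunction] at hk
    simpa only [dirichletEigenbasis_apply] using
      (mul_left_cancel₀ (neg_ne_zero.2 (dirichletEigenvalue_pos k).ne') hk).symm
  rwa [hvv']

end DirichletEigenbasis

section Compactness

theorem locallyL2_iff_forall_Ioo {E : Type*} [NormedAddCommGroup E] {r : ℝ → E} :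
    LocallyL2 r ↔ ∀ T, 0 < T → MemLp r 2 (volume.restrict (Ioo 0 T)) := by
  simp only [LocallyL2, restrict_Ioo_eq_restrict_Ioc]
  refine ⟨fun h T _ => h T, fun h T => ?_⟩
  rcases lt_or_ge 0 T with hT | hT
  · exact h T hT
  · simp [Ioc_eq_empty hT.not_gt]

theorem IsMildSolution.uniformlyLocallyBounded {ι E : Type*} [NormedAddCommGroup E]
    [InnerProductSpace ℝ E] {e : HilbertBasis ι ℝ E} {l : ι → ℝ} {L M : ℝ} {un rn : ℕ → ℝ → E}
    (h : ∀ n, IsMildSolution e l (un n) (rn n)) (hL : 0 < L) (hl : ∀ k, L ≤ l k)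
    (h0 : ∀ n, ‖un n 0‖ ≤ M)
    (hr : ∀ T, ∃ B, ∀ n, ∀ᵐ t ∂volume.restrict (Ioc 0 T), ‖rn n t‖ ≤ B + B * ‖un n t‖) :
    UniformlyLocallyBounded rn := by
  intro T
  obtain ⟨B, hB⟩ := hr T
  set K := (M ^ 2 + L⁻¹ * (2 * B ^ 2 * T)) * Real.exp (L⁻¹ * (2 * B ^ 2) * T)
  refine ⟨|B| + |B| * √K, fun n => ?_⟩
  filter_upwards [hB n, ae_restrict_mem measurableSet_Ioc] with t ht hmem
  have hT : 0 ≤ T := hmem.1.le.trans hmem.2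
  have hsq : ‖un n t‖ ^ 2 ≤ K :=
    ((h n).norm_sq_le_mul_exp hL hl (hB n) (Ioc_subset_Icc_self hmem)).trans <| by
      simp only [K]
      gcongr
      exacts [h0 n, hmem.2]
  refine ht.trans ?_
  gcongr
  exacts [le_abs_self B, le_abs_self B, Real.le_sqrt_of_sq_le hsq]

instance : TopologicalSpace.SeparableSpace Hsp :=
  have : Fact ((2 : ENNReal) ≠ ⊤) := ⟨ENNReal.ofNat_ne_top⟩
  inferInstance

theorem isStrongSolution_iff_exists_isMildSolution {b ω : ℝ → ℝ} {u : ℝ → Hsp} :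
    IsStrongSolution b ω 0 u ↔
      ∃ r, IsMildSolution dirichletEigenbasis dirichletEigenvalue u r ∧
        ∀ᵐ t ∂volume.restrict (Ioi (0 : ℝ)), ∀ᵐ x ∂μ01,
          ∃ h ∈ heaviside (u t x), r t x = b t * h + ω t * u t x := by
  constructor
  · rintro ⟨r, u', w, h⟩
    refine ⟨r, .of_isPrimitiveOn_add h.cont (locallyL2_iff_forall_Ioo.2 h.rmem)
      (h.dom.mono fun t ht => inDomainA_iff_forall_inner.1 ht) fun T₁ T₂ hT₁ hT₁₂ => ?_, h.sel⟩
    obtain ⟨hint, heq⟩ := h.fund T₁ T₂ hT₁ hT₁₂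
    exact IsPrimitiveOn.congr_ae ⟨hint, heq⟩ hT₁₂.le
      (ae_restrict_of_ae_restrict_of_subset (fun t ht => hT₁.trans ht.1) h.eq)
  · rintro ⟨r, h, hsel⟩
    obtain ⟨w, hwL2, hw⟩ := h.exists_locallyL2_sqrt_smul (pow_pos Real.pi_pos 2)
      pi_sq_le_dirichletEigenvalue
    refine ⟨r, fun t => r t + w t, w, h.continuousOn, locallyL2_iff_forall_Ioo.1 h.locallyL2, hsel,
      hw.mono fun t ht => inDomainA_iff_forall_inner.2 ht, .of_forall fun _ => rfl,
      fun T₁ T₂ hT₁ hT₁₂ => ?_⟩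
    obtain ⟨hint, heq⟩ := h.isPrimitiveOn_add hwL2 hw hT₁ hT₁₂.le
    exact ⟨hint, heq⟩

theorem exists_norm_le_of_tendsto {X E : Type*} [TopologicalSpace X] [LocallyCompactSpace X]
    [SeminormedAddCommGroup E] {σn : ℕ → C(X, E)} {σ : C(X, E)} (hσ : Tendsto σn atTop (𝓝 σ))
    {s : Set X} (hs : IsCompact s) : ∃ B, ∀ n, ∀ x ∈ s, ‖σn n x‖ ≤ B := by
  obtain ⟨B, hB⟩ := (hσ.isCompact_insert_range.prod hs).exists_bound_of_continuousOn
    (f := fun p : C(X, E) × X => p.1 p.2) (by fun_prop)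
  exact ⟨B, fun n x hx => hB (σn n, x) ⟨mem_insert_of_mem _ (mem_range_self n), hx⟩⟩

theorem uniformlyLocallyBounded_of_heaviside {σn : ℕ → C(ℝ, ℝ × ℝ)} {σ : C(ℝ, ℝ × ℝ)}
    (hσ : Tendsto σn atTop (𝓝 σ)) {un rn : ℕ → ℝ → Hsp} {u0 : Hsp}
    (h0 : Tendsto (fun n => un n 0) atTop (𝓝 u0))
    (hmild : ∀ n, IsMildSolution dirichletEigenbasis dirichletEigenvalue (un n) (rn n))
    (hsel : ∀ n, ∀ᵐ t ∂volume.restrict (Ioi (0 : ℝ)), ∀ᵐ x ∂μ01,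
      ∃ h ∈ heaviside (un n t x), rn n t x = (σn n t).1 * h + (σn n t).2 * un n t x) :
    UniformlyLocallyBounded rn := by
  obtain ⟨M, hM⟩ := (Metric.isBounded_range_of_tendsto _ h0).exists_norm_le
  refine IsMildSolution.uniformlyLocallyBounded hmild (pow_pos Real.pi_pos 2)
    pi_sq_le_dirichletEigenvalue (fun n => hM _ (mem_range_self n)) fun T => ?_
  obtain ⟨B, hB⟩ := exists_norm_le_of_tendsto hσ (isCompact_Icc (a := 0) (b := T))
  refine ⟨B, fun n => ?_⟩
  filter_upwards [ae_restrict_of_ae_restrict_of_subset Ioc_subset_Ioi_self (hsel n),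
    ae_restrict_mem measurableSet_Ioc] with t ht hmem
  have hBt := hB n t (Ioc_subset_Icc_self hmem)
  refine (norm_le_of_ae_exists_mem_heaviside ht).trans ?_
  gcongr
  exacts [(norm_fst_le (σn n t)).trans hBt, (norm_snd_le (σn n t)).trans hBt]

theorem statement18_general {σn : ℕ → C(ℝ, ℝ × ℝ)} {σ : C(ℝ, ℝ × ℝ)}
    (hσ : Tendsto σn atTop (𝓝 σ)) {un : ℕ → ℝ → Hsp} {u0 : Hsp}
    (hun : ∀ n, IsStrongSolution (fun s => (σn n s).1) (fun s => (σn n s).2) 0 (un n))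
    (h0 : Tendsto (fun n => un n 0) atTop (𝓝 u0)) :
    ∃ φ : ℕ → ℕ, StrictMono φ ∧ ∃ u : ℝ → Hsp,
      IsStrongSolution (fun s => (σ s).1) (fun s => (σ s).2) 0 u ∧ u 0 = u0 ∧
        ∀ T : ℝ, 0 < T → TendstoUniformlyOn (fun k t => un (φ k) t) u atTop (Icc 0 T) := by
  choose rn hmild hsel using fun n => isStrongSolution_iff_exists_isMildSolution.1 (hun n)
  have hb := uniformlyLocallyBounded_of_heaviside hσ h0 hmild hsel
  obtain ⟨φ, hφ, r, hr, hweak⟩ := hb.exists_subseq_tendstoWeakly fun n => (hmild n).locallyL2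
  have hbφ : UniformlyLocallyBounded fun n => rn (φ n) := fun T =>
    (hb T).imp fun C hC n => hC (φ n)
  have h0φ : Tendsto (fun n => un (φ n) 0) atTop (𝓝 u0) := h0.comp hφ.tendsto_atTop
  have hσφ (T : ℝ) (_ : 0 ≤ T) : TendstoUniformlyOn (fun n => σn (φ n)) σ atTop (Icc 0 T) :=
    ContinuousMap.tendsto_iff_forall_isCompact_tendstoUniformlyOn.1
      (hσ.comp hφ.tendsto_atTop) _ isCompact_Icc
  obtain ⟨u, hu, hunif⟩ := IsMildSolution.exists_tendstoUniformlyOn (fun n => hmild (φ n))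
    tendsto_dirichletEigenvalue h0φ.cauchySeq hbφ hr hweak
  have hincl := hweak.ae_exists_mem_heaviside hbφ (fun n => (hmild (φ n)).locallyL2) hr
    hu.continuousOn σ.continuous.continuousOn hunif hσφ fun n => hsel (φ n)
  have hu0 : u 0 = u0 :=
    tendsto_nhds_unique ((hunif 0 le_rfl).tendsto_at (left_mem_Icc.2 le_rfl)) h0φ
  exact ⟨φ, hφ, u, isStrongSolution_iff_exists_isMildSolution.2 ⟨r, hu, hincl⟩, hu0,
    fun T hT => hunif T hT.le⟩

end Compactness

end

/-- under (Cond1), `ω₁ < π²` and uniform continuity of `b, ω`, if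
`u₀ⁿ → u₀` in `H` and `σₙ → σ` in `Σ`, then any sequence of solutions
`uₙ ∈ 𝒟_{0,σₙ}(u₀ⁿ)` has a subsequence converging, uniformly on compact subsets
of `[0,∞)`, to some solution `u ∈ 𝒟_{0,σ}(u₀)`. -/
theorem statement18
    (b ω : ℝ → ℝ) (b0 b1 ω0 ω1 : ℝ) (hC : Cond1 b ω b0 b1 ω0 ω1)
    (hω1 : ω1 < Real.pi ^ 2)
    (hbu : UniformContinuous b) (hωu : UniformContinuous ω)
    (σ0 : C(ℝ, ℝ × ℝ)) (hσ0 : ∀ t, σ0 t = (b t, ω t))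
    (σn : ℕ → C(ℝ, ℝ × ℝ)) (σ : C(ℝ, ℝ × ℝ))
    (hσn : ∀ n, σn n ∈ hullSet σ0) (hσ : σ ∈ hullSet σ0)
    (hσconv : Filter.Tendsto σn Filter.atTop (nhds σ))
    (u0n : ℕ → Hsp) (u0 : Hsp)
    (hu0conv : Filter.Tendsto u0n Filter.atTop (nhds u0))
    (un : ℕ → ℝ → Hsp)
    (hun : ∀ n, IsStrongSolution (fun s => (σn n s).1) (fun s => (σn n s).2) 0 (un n))
    (hun0 : ∀ n, un n 0 = u0n n) :
    ∃ φ : ℕ → ℕ, StrictMono φ ∧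
      ∃ u : ℝ → Hsp,
        IsStrongSolution (fun s => (σ s).1) (fun s => (σ s).2) 0 u ∧
        u 0 = u0 ∧
        ∀ T : ℝ, 0 < T →
          TendstoUniformlyOn (fun k t => un (φ k) t) u Filter.atTop (Icc 0 T) := by
  exact statement18_general hσconv hun (by simpa only [hun0] using hu0conv)

end
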